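/- arXiv:1810.03555 — 2 statements merged into one kernel-verified Lean document; each statement's English description precedes it below -/
import Mathlib

section
/- Let K ⊆ ℝ² be a compact convex set with nonempty interior that is centrally symmetric (K = −K). Then K contains a lattice point of ℤ² in any position if and only if for every orthogonal transformation Q ∈ O(2) the rotated body Q(K) contains a spacefiller with respect to ℤ², i.e., there exists a convex set L ⊆ Q(K) which is either a parallelogram or a centrally symmetric hexagon such that L + ℤ² = ℝ² and for all distinct u, v ∈ ℤ² the interiors of L + u and L + v are disjoint. -/
/-! If `Q(K)` contains a spacefiller `L` for every `Q`, then `L + ℤ² = ℝ²` gives a lattice point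
in every translate of `Q(K)`, because `ℤ² = -ℤ²`.

Conversely, let `K` be a compact convex symmetric set with `K + ℤ² = ℝ²` (in the theorem this is
applied to `Q(K)`). The spacefiller is built from three translates of `K` with a common point.

* Connectedness of the plane gives a primitive lattice vector `a` with `a / 2 ∈ K`, and
  connectedness of a closed convex curve close to `K ∩ (K + a)` gives a third translate `K + b`,
  with `a`, `b` linearly independent, such that `K`, `K + a`, `K + b` share a point `c`
  (`exists_triple`).
* A lattice point `z` of the triangle `0, a, b` satisfies `c - z ∈ K` by convexity, so a descent on
  `|det (a, b)|` makes `a`, `b` a basis of `ℤ²` (`exists_basis_triple`).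
* If a barycentric coordinate of `c` with respect to the triangle `0, a, b` is at least `1/2`, then
  `K` contains a parallelogram tile (`exists_parallelogram`, applied with each of the three
  vertices in the appropriate role). Otherwise `c` is interior to the medial triangle, and
  `±c, ±(c - a), ±(c - b)` are the vertices of a hexagonal tile contained in `K`
  (`exists_hexagon`). In both cases disjointness of interiors is read off from linear functionals
  bounded on the tile. -/

open Set Pointwise Real MeasureTheory

noncomputable section

abbrev E2 := EuclideanSpace ℝ (Fin 2)

def v2 (a b : ℝ) : E2 := (WithLp.equiv 2 (Fin 2 → ℝ)).symm ![a, b]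

/-- The lattice `ℤ² ⊆ ℝ²`. -/
def latticeZ2 : Set E2 := {v | ∀ i, ∃ m : ℤ, v i = (m : ℝ)}

/-- `K` contains a lattice point of `ℤ²` in any position: every rotated and translated
copy `Q(K) + x` of `K` contains a point of `ℤ²`. -/
def CoversAnyPosition (K : Set E2) : Prop :=
  ∀ (Q : E2 ≃ₗᵢ[ℝ] E2) (x : E2), ∃ z ∈ (fun y => Q y + x) '' K, z ∈ latticeZ2

/-- A parallelogram in `ℝ²`: `{v + s•u₁ + t•u₂ : s, t ∈ [0,1]}` for linearly
independent `u₁, u₂`. -/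
def IsParallelogram (L : Set E2) : Prop :=
  ∃ (v u₁ u₂ : E2), LinearIndependent ℝ ![u₁, u₂] ∧
    L = {p | ∃ s t : ℝ, s ∈ Icc (0:ℝ) 1 ∧ t ∈ Icc (0:ℝ) 1 ∧ p = v + s • u₁ + t • u₂}

/-- A centrally symmetric hexagon in `ℝ²`: the convex hull of six points, opposite ones
symmetric with respect to the center `c`, all six being vertices (extreme points). -/
def IsCentSymHexagon (L : Set E2) : Prop :=
  ∃ (c : E2) (p : Fin 6 → E2),
    (∀ i, p (i + 3) = (2 : ℝ) • c - p i) ∧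
    L = convexHull ℝ (Set.range p) ∧
    ∀ i, p i ∈ Set.extremePoints ℝ L

/-- A spacefiller with respect to `ℤ²`: a parallelogram or centrally symmetric hexagon
whose `ℤ²`-translates cover `ℝ²` and have pairwise disjoint interiors. -/
def IsSpacefiller (L : Set E2) : Prop :=
  (IsParallelogram L ∨ IsCentSymHexagon L) ∧
  L + latticeZ2 = Set.univ ∧
  ∀ u ∈ latticeZ2, ∀ v ∈ latticeZ2, u ≠ v →
    Disjoint (interior ((· + u) '' L)) (interior ((· + v) '' L))

/-! ### The lattice -/

lemma zero_mem_lat : (0 : E2) ∈ latticeZ2 := fun _ => ⟨0, by simp⟩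

lemma neg_mem_lat {x : E2} (hx : x ∈ latticeZ2) : -x ∈ latticeZ2 := by
  intro i
  obtain ⟨m, hm⟩ := hx i
  exact ⟨-m, by simp [hm]⟩

lemma add_mem_lat {x y : E2} (hx : x ∈ latticeZ2) (hy : y ∈ latticeZ2) :
    x + y ∈ latticeZ2 := by
  intro i
  obtain ⟨m, hm⟩ := hx i
  obtain ⟨n, hn⟩ := hy i
  exact ⟨m + n, by simp [hm, hn]⟩

lemma sub_mem_lat {x y : E2} (hx : x ∈ latticeZ2) (hy : y ∈ latticeZ2) :
    x - y ∈ latticeZ2 := by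
  rw [sub_eq_add_neg]
  exact add_mem_lat hx (neg_mem_lat hy)

lemma zsmul_mem_lat {x : E2} (k : ℤ) (hx : x ∈ latticeZ2) : (k : ℝ) • x ∈ latticeZ2 := by
  intro i
  obtain ⟨m, hm⟩ := hx i
  exact ⟨k * m, by simp [hm]⟩

lemma v2_mem_lat (m n : ℤ) : v2 m n ∈ latticeZ2 := by
  intro i
  fin_cases i
  · exact ⟨m, by simp [v2]⟩
  · exact ⟨n, by simp [v2]⟩

lemma E2_ext {x y : E2} (h0 : x 0 = y 0) (h1 : x 1 = y 1) : x = y := by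
  ext i
  fin_cases i
  · exact h0
  · exact h1

lemma one_le_dist_of_mem_lat {x y : E2} (hx : x ∈ latticeZ2) (hy : y ∈ latticeZ2)
    (h : x ≠ y) : 1 ≤ dist x y := by
  have hi : ∃ i, x i ≠ y i := by
    by_contra! hc
    exact h (E2_ext (hc 0) (hc 1))
  obtain ⟨i, hi⟩ := hi
  obtain ⟨m, hm⟩ := hx i
  obtain ⟨n, hn⟩ := hy i
  have h1 : ‖(x - y) i‖ ≤ ‖x - y‖ := PiLp.norm_apply_le (x - y) i
  rw [dist_eq_norm]
  refine le_trans ?_ h1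
  have hmn : m - n ≠ 0 := by
    intro h0
    apply hi
    rw [hm, hn, sub_eq_zero.mp h0]
  have : (1 : ℤ) ≤ |m - n| := Int.one_le_abs hmn
  have h2 : (1 : ℝ) ≤ |(m : ℝ) - n| := by exact_mod_cast this
  simpa [hm, hn, Real.norm_eq_abs] using h2

/-- The translates of a compact set by any family of lattice vectors have a closed union,
since any set of lattice vectors is uniformly discrete. -/
lemma isClosed_lat_add {S K : Set E2} (hS : S ⊆ latticeZ2) (hK : IsCompact K) :
    IsClosed (S + K) := by
  apply IsClosed.add_right_of_isCompact _ hK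
  refine Metric.isClosed_of_pairwise_le_dist one_pos ?_
  intro x hx y hy hxy
  exact one_le_dist_of_mem_lat (hS hx) (hS hy) hxy

/-- The determinant of the matrix with columns `a`, `b`. -/
def det2 (a b : E2) : ℝ := a 0 * b 1 - a 1 * b 0

/-! ### Three lattice translates of a covering body with a common point -/

lemma mem_of_between {K : Set E2} (hc : Convex ℝ K) {x a : E2} {r s t : ℝ}
    (hr : x - r • a ∈ K) (ht : x - t • a ∈ K) (h1 : r ≤ s) (h2 : s ≤ t) :
    x - s • a ∈ K := by
  have hconv : Convex ℝ {u : ℝ | x - u • a ∈ K} := by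
    intro u hu v hv p q hp hq hpq
    have h := hc hu hv hp hq hpq
    have e : p • (x - u • a) + q • (x - v • a) = x - (p • u + q • v) • a := by
      have : x = (p + q) • x := by rw [hpq, one_smul]
      conv_rhs => rw [this]
      simp only [smul_eq_mul]
      module
    rw [e] at h
    exact h
  exact hconv.ordConnected.out hr ht ⟨h1, h2⟩

/-- Some two translates `K`, `K + a` meet, as the plane is connected; by symmetry and
convexity this says `a / 2 ∈ K`. -/
lemma exists_half_mem {K : Set E2} (hK : IsCompact K) (hc : Convex ℝ K)
    (hs : ∀ x ∈ K, -x ∈ K) (hcov : ∀ p : E2, ∃ z ∈ latticeZ2, p - z ∈ K) :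
    ∃ a ∈ latticeZ2, a ≠ 0 ∧ (1 / 2 : ℝ) • a ∈ K := by
  have hpre : IsPreconnected (univ : Set E2) := isPreconnected_univ
  obtain ⟨z₀, -, hz₀⟩ := hcov 0
  have h := isPreconnected_closed_iff.1 hpre K ({z | z ∈ latticeZ2 ∧ z ≠ 0} + K) hK.isClosed
    (isClosed_lat_add (fun z hz => hz.1) hK) ?_ ⟨_, mem_univ _, hz₀⟩ ?_
  · obtain ⟨x, -, hx, z, ⟨hz, hz0⟩, y, hy, hxy⟩ := h
    refine ⟨z, hz, hz0, ?_⟩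
    have hm := hc hx (hs y hy) (by norm_num : (0 : ℝ) ≤ 1 / 2) (by norm_num : (0 : ℝ) ≤ 1 / 2)
      (by norm_num)
    have e : (1 / 2 : ℝ) • z = (1 / 2 : ℝ) • x + (1 / 2 : ℝ) • -y := by
      rw [← hxy]
      simp
    rw [e]
    exact hm
  · intro p _
    obtain ⟨z, hz, hpz⟩ := hcov p
    by_cases h0 : z = 0
    · left
      simpa [h0] using hpz
    · right
      exact ⟨z, ⟨hz, h0⟩, p - z, hpz, by simp⟩
  · refine ⟨v2 (1 : ℤ) (0 : ℤ) + (0 - z₀), mem_univ _,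
      v2 (1 : ℤ) (0 : ℤ), ⟨v2_mem_lat 1 0, ?_⟩, _, hz₀, rfl⟩
    intro h
    have := congrArg (fun x : E2 => x 0) h
    simp [v2] at this

/-- Dividing the vector `a` of `exists_half_mem` by the gcd of its coordinates makes it primitive,
and half of it stays in `K` by convexity. -/
lemma exists_primitive_half_mem {K : Set E2} (hK : IsCompact K) (hc : Convex ℝ K)
    (hs : ∀ x ∈ K, -x ∈ K) (hcov : ∀ p : E2, ∃ z ∈ latticeZ2, p - z ∈ K) :
    ∃ a ∈ latticeZ2, (1 / 2 : ℝ) • a ∈ K ∧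
      ∀ z ∈ latticeZ2, det2 a z = 0 → ∃ k : ℤ, z = (k : ℝ) • a := by
  obtain ⟨a, ha, ha0, haK⟩ := exists_half_mem hK hc hs hcov
  obtain ⟨m, hm⟩ := ha 0
  obtain ⟨n, hn⟩ := ha 1
  have hg : 0 < Int.gcd m n := by
    apply Nat.pos_of_ne_zero
    intro h
    rw [Int.gcd_eq_zero_iff] at h
    apply ha0
    apply E2_ext
    · simp [hm, h.1]
    · simp [hn, h.2]
  obtain ⟨m', hm'⟩ := Int.gcd_dvd_left m n
  obtain ⟨n', hn'⟩ := Int.gcd_dvd_right m n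
  have hbez := Int.gcd_eq_gcd_ab m n
  set g := Int.gcd m n with hgdef
  set r := Int.gcdA m n
  set s := Int.gcdB m n
  have hgz : (g : ℤ) ≠ 0 := by exact_mod_cast hg.ne'
  have hb : m' * r + n' * s = 1 := by
    have : (g : ℤ) * (m' * r + n' * s) = g * 1 := by
      rw [mul_one]
      conv_rhs => rw [hbez, hm', hn']
      ring
    exact mul_left_cancel₀ hgz this
  have hbR : (m' : ℝ) * r + n' * s = 1 := by exact_mod_cast hb
  have hgR : (0 : ℝ) < g := by exact_mod_cast hg
  have hmR : (m : ℝ) = g * m' := by exact_mod_cast hm'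
  have hnR : (n : ℝ) = g * n' := by exact_mod_cast hn'
  have hag : a = (g : ℝ) • v2 m' n' := by
    apply E2_ext
    · simp [v2, hm, hmR]
    · simp [v2, hn, hnR]
  refine ⟨v2 m' n', v2_mem_lat m' n', ?_, ?_⟩
  · have h1 : (0 : E2) - (-(1 / 2) : ℝ) • a ∈ K := by
      convert haK using 1
      module
    have h2 : (0 : E2) - ((1 / 2) : ℝ) • a ∈ K := by
      convert hs _ haK using 1
      module
    have hg1 : (1 : ℝ) ≤ g := by exact_mod_cast hg
    have h3 := mem_of_between hc h1 h2 (s := -(1 / (2 * (g : ℝ))))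
      (by
        rw [neg_le_neg_iff]
        apply one_div_le_one_div_of_le <;> linarith)
      (by
        have : 0 < 1 / (2 * (g : ℝ)) := by positivity
        linarith)
    convert h3 using 1
    rw [hag, zero_sub, neg_smul, neg_neg, smul_smul]
    congr 1
    field_simp
  · intro z hz hdet
    obtain ⟨p, hp⟩ := hz 0
    obtain ⟨q, hq⟩ := hz 1
    simp only [det2, v2, hp, hq] at hdet
    simp at hdet
    refine ⟨p * r + q * s, ?_⟩
    apply E2_ext
    · simp [v2, hp]
      linear_combination -(p : ℝ) * hbR + (-s : ℝ) * hdet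
    · simp [v2, hq]
      linear_combination -(q : ℝ) * hbR + (r : ℝ) * hdet

/-- With `a` primitive and `a / 2 ∈ K`, the sets `A = ⋃_{k ≤ 0} (K + k a)` and
`B = ⋃_{k ≥ 1} (K + k a)` meet exactly in `I = K ∩ (K + a)`. If `I` missed all translates
`K + z` with `z ∉ ℤ a`, a small convex curve around `I` would be split by the closed sets
`A` and `B`; the reflection in `a / 2` exchanges them, so neither part is empty,
contradicting the connectedness of the curve. -/
lemma exists_triple {K : Set E2} (hK : IsCompact K) (hc : Convex ℝ K)
    (hs : ∀ x ∈ K, -x ∈ K) (hcov : ∀ p : E2, ∃ z ∈ latticeZ2, p - z ∈ K) :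
    ∃ a ∈ latticeZ2, ∃ b ∈ latticeZ2, ∃ c : E2, det2 a b ≠ 0 ∧
      c ∈ K ∧ c - a ∈ K ∧ c - b ∈ K := by
  obtain ⟨a, ha, haK, hprim⟩ := exists_primitive_half_mem hK hc hs hcov
  by_contra! hno
  set I : Set E2 := {x | x ∈ K ∧ x - a ∈ K} with hI
  set A : Set E2 := {z | ∃ k : ℤ, k ≤ 0 ∧ z = (k : ℝ) • a} + K with hA
  set B : Set E2 := {z | ∃ k : ℤ, 1 ≤ k ∧ z = (k : ℝ) • a} + K with hB
  set V : Set E2 := {z | z ∈ latticeZ2 ∧ det2 a z ≠ 0} + K with hV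
  have hAcl : IsClosed A := isClosed_lat_add (by
    rintro z ⟨k, -, rfl⟩
    exact zsmul_mem_lat k ha) hK
  have hBcl : IsClosed B := isClosed_lat_add (by
    rintro z ⟨k, -, rfl⟩
    exact zsmul_mem_lat k ha) hK
  have hVcl : IsClosed V := isClosed_lat_add (fun z hz => hz.1) hK
  have hIcl : IsClosed {x : E2 | x - a ∈ K} :=
    hK.isClosed.preimage (by fun_prop : Continuous fun x : E2 => x - a)
  have hIcomp : IsCompact I := hK.inter_right hIcl
  have hIconv : Convex ℝ I := by
    intro x hx y hy p q hp hq hpq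
    refine ⟨hc hx.1 hy.1 hp hq hpq, ?_⟩
    convert hc hx.2 hy.2 hp hq hpq using 1
    have : a = (p + q) • a := by rw [hpq, one_smul]
    conv_lhs => rw [this]
    module
  have hIV : Disjoint I V := by
    rw [Set.disjoint_left]
    rintro x ⟨hx1, hx2⟩ ⟨z, ⟨hz, hdz⟩, y, hy, hzy⟩
    apply hno a ha z hz x hdz hx1 hx2
    rw [← hzy]
    simpa using hy
  obtain ⟨δ, hδ, hdis⟩ := hIV.exists_cthickenings hIcomp hVcl
  have hIne : (1 / 2 : ℝ) • a ∈ I := by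
    refine ⟨haK, ?_⟩
    convert hs _ haK using 1
    module
  set T := Metric.thickening δ I with hT
  have hTopen : IsOpen T := Metric.isOpen_thickening
  have hIT : I ⊆ T := Metric.self_subset_thickening hδ I
  obtain ⟨h, -, -, hfr⟩ := exists_homeomorph_image_interior_closure_frontier_eq_unitBall
    (s := T) (hIconv.thickening δ) (by
      rw [hTopen.interior_eq]
      exact ⟨_, hIT hIne⟩) hIcomp.isBounded.thickening
  have hrank : 1 < Module.rank ℝ E2 := by
    rw [← Module.finrank_eq_rank]
    simp
  have hpre : IsPreconnected (frontier T) := by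
    rw [← h.isPreconnected_image, hfr]
    exact isPreconnected_sphere hrank 0 1
  have hne : (frontier T).Nonempty := by
    rw [← Set.image_nonempty (f := h), hfr]
    exact NormedSpace.sphere_nonempty.2 zero_le_one
  have hcover : frontier T ⊆ A ∪ B := by
    intro x hx
    obtain ⟨z, hz, hxz⟩ := hcov x
    have hx1 : x ∈ Metric.cthickening δ I :=
      Metric.closure_thickening_subset_cthickening δ I hx.1
    by_cases hd : det2 a z = 0
    · obtain ⟨k, rfl⟩ := hprim z hz hd
      rcases le_or_gt k 0 with hk | hk
      · left
        exact ⟨_, ⟨k, hk, rfl⟩, _, hxz, by simp⟩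
      · right
        exact ⟨_, ⟨k, hk, rfl⟩, _, hxz, by simp⟩
    · exfalso
      exact Set.disjoint_left.1 hdis hx1
        (Metric.self_subset_cthickening V ⟨z, ⟨hz, hd⟩, _, hxz, by simp⟩)
  have hTsymm : ∀ x ∈ frontier T, a - x ∈ frontier T := by
    have hpreT : (Homeomorph.subLeft a) ⁻¹' T = T := by
      have key : ∀ x ∈ T, a - x ∈ T := by
        intro x hx
        rw [hT, Metric.mem_thickening_iff] at hx ⊢
        obtain ⟨z, hz, hxz⟩ := hx
        refine ⟨a - z, ⟨?_, ?_⟩, by rwa [dist_sub_left]⟩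
        · convert hs _ hz.2 using 1
          abel
        · convert hs _ hz.1 using 1
          abel
      ext x
      constructor
      · intro hx
        simpa using key _ hx
      · exact key x
    intro x hx
    have h2 := (Homeomorph.subLeft a).preimage_frontier T
    rw [hpreT] at h2
    rw [← h2] at hx
    exact hx
  have hswapA : ∀ x ∈ A, a - x ∈ B := by
    rintro x ⟨_, ⟨k, hk, rfl⟩, y, hy, rfl⟩
    refine ⟨_, ⟨1 - k, by omega, rfl⟩, -y, hs y hy, ?_⟩
    push_cast
    module
  have hswapB : ∀ x ∈ B, a - x ∈ A := by
    rintro x ⟨_, ⟨k, hk, rfl⟩, y, hy, rfl⟩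
    refine ⟨_, ⟨1 - k, by omega, rfl⟩, -y, hs y hy, ?_⟩
    push_cast
    module
  have hboth : (frontier T ∩ A).Nonempty ∧ (frontier T ∩ B).Nonempty := by
    obtain ⟨x, hx⟩ := hne
    rcases hcover hx with hxA | hxB
    · exact ⟨⟨x, hx, hxA⟩, ⟨a - x, hTsymm x hx, hswapA x hxA⟩⟩
    · exact ⟨⟨a - x, hTsymm x hx, hswapB x hxB⟩, ⟨x, hx, hxB⟩⟩
  obtain ⟨x, hxT, ⟨_, ⟨k, hk, rfl⟩, y, hy, hxy⟩, ⟨_, ⟨l, hl, rfl⟩, y', hy', hxy'⟩⟩ :=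
    isPreconnected_closed_iff.1 hpre A B hAcl hBcl hcover hboth.1 hboth.2
  have h1 : x - (k : ℝ) • a ∈ K := by
    rw [← hxy]
    simpa using hy
  have h2 : x - (l : ℝ) • a ∈ K := by
    rw [← hxy']
    simpa using hy'
  have hkR : (k : ℝ) ≤ 0 := by exact_mod_cast hk
  have hlR : (1 : ℝ) ≤ l := by exact_mod_cast hl
  have hxI : x ∈ I := by
    constructor
    · simpa using mem_of_between hc h1 h2 (s := 0) hkR (by linarith)
    · simpa using mem_of_between hc h1 h2 (s := 1) (by linarith) hlR
  rw [hTopen.frontier_eq] at hxT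
  exact hxT.2 (hIT hxI)

/-! ### Passing to a lattice basis -/

lemma det2_int {a b : E2} (ha : a ∈ latticeZ2) (hb : b ∈ latticeZ2) :
    ∃ k : ℤ, det2 a b = k := by
  obtain ⟨p, hp⟩ := ha 0
  obtain ⟨q, hq⟩ := ha 1
  obtain ⟨u, hu⟩ := hb 0
  obtain ⟨v, hv⟩ := hb 1
  exact ⟨p * v - q * u, by simp [det2, hp, hq, hu, hv]⟩

lemma cramer {a b : E2} (hD : det2 a b ≠ 0) (w : E2) :
    w = (det2 w b / det2 a b) • a + (det2 a w / det2 a b) • b := by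
  apply E2_ext
  · simp only [PiLp.add_apply, PiLp.smul_apply, smul_eq_mul]
    field_simp
    simp only [det2]
    ring
  · simp only [PiLp.add_apply, PiLp.smul_apply, smul_eq_mul]
    field_simp
    simp only [det2]
    ring

lemma det2_comb_left (a b : E2) (s t : ℝ) : det2 (s • a + t • b) b = s * det2 a b := by
  simp [det2]
  ring

lemma det2_comb_right (a b : E2) (s t : ℝ) : det2 a (s • a + t • b) = t * det2 a b := by
  simp [det2]
  ring

lemma conv3 {K : Set E2} (hc : Convex ℝ K) {x y z : E2} (hx : x ∈ K) (hy : y ∈ K)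
    (hz : z ∈ K) {p q r : ℝ} (hp : 0 ≤ p) (hq : 0 ≤ q) (hr : 0 ≤ r) (h : p + q + r = 1) :
    p • x + q • y + r • z ∈ K := by
  have := hc.sum_mem (t := Finset.univ) (w := ![p, q, r]) (z := ![x, y, z])
    (by intro i _; fin_cases i <;> simpa) (by simp [Fin.sum_univ_three, h])
    (by intro i _; fin_cases i <;> simpa)
  simpa [Fin.sum_univ_three] using this

/-- If the lattice vectors `a`, `b` do not form a basis, then the triangle `0, a, b` contains
a lattice point besides its vertices: take a lattice point with non-integral coordinates
and reduce them modulo `1`, reflecting in the centre of the unit parallelogram if needed. -/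
lemma exists_lat_in_triangle {a b : E2} (ha : a ∈ latticeZ2) (hb : b ∈ latticeZ2)
    (hD : det2 a b ≠ 0) (hD1 : |det2 a b| ≠ 1) :
    ∃ s t : ℝ, s • a + t • b ∈ latticeZ2 ∧ 0 ≤ s ∧ 0 ≤ t ∧ s + t ≤ 1 ∧ s < 1 ∧ t < 1 ∧
      (s ≠ 0 ∨ t ≠ 0) := by
  have hw : ∃ w ∈ latticeZ2, ¬ ((∃ i : ℤ, det2 w b / det2 a b = i) ∧
      ∃ j : ℤ, det2 a w / det2 a b = j) := by
    by_contra! hall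
    obtain ⟨⟨i1, hi1⟩, j1, hj1⟩ := hall _ (v2_mem_lat 1 0)
    obtain ⟨⟨i2, hi2⟩, j2, hj2⟩ := hall _ (v2_mem_lat 0 1)
    obtain ⟨D, hDi⟩ := det2_int ha hb
    rw [div_eq_iff hD] at hi1 hj1 hi2 hj2
    have e1 : b 1 = i1 * det2 a b := by rw [← hi1]; simp [det2, v2]
    have e2 : -b 0 = i2 * det2 a b := by rw [← hi2]; simp [det2, v2]
    have e3 : -a 1 = j1 * det2 a b := by rw [← hj1]; simp [det2, v2]
    have e4 : a 0 = j2 * det2 a b := by rw [← hj2]; simp [det2, v2]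
    have e5 : det2 a b = (j2 * i1 - j1 * i2) * det2 a b * det2 a b := by
      calc det2 a b = a 0 * b 1 - (-a 1) * (-b 0) := by simp only [det2]; ring
        _ = _ := by rw [e1, e2, e3, e4]; ring
    have e6 : (j2 * i1 - j1 * i2 : ℝ) * det2 a b = 1 := by
      apply mul_right_cancel₀ hD
      rw [← e5, one_mul]
    rw [hDi] at e6
    have e7 : (j2 * i1 - j1 * i2) * D = 1 := by exact_mod_cast e6
    apply hD1
    rw [hDi]
    have : |D| = 1 := Int.isUnit_iff_abs_eq.1 (IsUnit.of_mul_eq_one_right _ e7)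
    exact_mod_cast this
  obtain ⟨w, hw, hnot⟩ := hw
  have hrep := cramer hD w
  set s := det2 w b / det2 a b
  set t := det2 a w / det2 a b
  have hz : Int.fract s • a + Int.fract t • b ∈ latticeZ2 := by
    have h := sub_mem_lat (sub_mem_lat hw (zsmul_mem_lat ⌊s⌋ ha)) (zsmul_mem_lat ⌊t⌋ hb)
    convert h using 1
    conv_rhs => rw [hrep]
    simp only [Int.fract]
    module
  have hs0 := Int.fract_nonneg s
  have ht0 := Int.fract_nonneg t
  have hs1 := Int.fract_lt_one s
  have ht1 := Int.fract_lt_one t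
  have hne : Int.fract s ≠ 0 ∨ Int.fract t ≠ 0 := by
    by_contra! hc
    apply hnot
    rw [Int.fract_eq_zero_iff, Int.fract_eq_zero_iff] at hc
    obtain ⟨⟨i, hi⟩, j, hj⟩ := hc
    exact ⟨⟨i, hi.symm⟩, j, hj.symm⟩
  rcases le_or_gt (Int.fract s + Int.fract t) 1 with h | h
  · exact ⟨_, _, hz, hs0, ht0, h, hs1, ht1, hne⟩
  · refine ⟨1 - Int.fract s, 1 - Int.fract t, ?_, by linarith, by linarith, by linarith,
      by linarith, by linarith, Or.inl (by linarith)⟩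
    convert sub_mem_lat (add_mem_lat ha hb) hz using 1
    module

/-- Descent on `|det (a, b)|`: a lattice point `z` of the triangle `0, a, b` satisfies
`c - z ∈ K` by convexity, so it can replace `a` or `b`. -/
lemma exists_basis_triple_aux {K : Set E2} (hc : Convex ℝ K) (n : ℕ) :
    ∀ a ∈ latticeZ2, ∀ b ∈ latticeZ2, ∀ c : E2, det2 a b ≠ 0 → |det2 a b| ≤ n →
      c ∈ K → c - a ∈ K → c - b ∈ K →
    ∃ a ∈ latticeZ2, ∃ b ∈ latticeZ2, |det2 a b| = 1 ∧ ∃ c : E2,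
      c ∈ K ∧ c - a ∈ K ∧ c - b ∈ K := by
  induction n with
  | zero =>
    intro a _ b _ c hD hn
    exact absurd (abs_nonpos_iff.1 (by simpa using hn)) hD
  | succ n ih =>
    intro a ha b hb c hD hn h0 h1 h2
    by_cases hD1 : |det2 a b| = 1
    · exact ⟨a, ha, b, hb, hD1, c, h0, h1, h2⟩
    obtain ⟨s, t, hz, hs0, ht0, hst, hs1, ht1, hne⟩ := exists_lat_in_triangle ha hb hD hD1
    have hcz : c - (s • a + t • b) ∈ K := by
      convert conv3 hc h0 h1 h2 (p := 1 - s - t) (by linarith) hs0 ht0 (by ring) using 1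
      module
    have hDpos : 0 < |det2 a b| := abs_pos.2 hD
    have hsmall : ∀ (x y : E2) (r : ℝ), x ∈ latticeZ2 → y ∈ latticeZ2 → 0 ≤ r → r < 1 →
        det2 x y = r * det2 a b → |det2 x y| ≤ n := by
      intro x y r hx hy hr0 hr1 hxy
      obtain ⟨k, hk⟩ := det2_int hx hy
      have hlt : |det2 x y| < ((n + 1 : ℕ) : ℝ) := by
        rw [hxy, abs_mul, abs_of_nonneg hr0]
        nlinarith
      rw [hk] at hlt ⊢
      have h3 : |k| < ((n + 1 : ℕ) : ℤ) := by exact_mod_cast hlt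
      have h4 : |k| ≤ (n : ℤ) := by push_cast at h3; omega
      exact_mod_cast h4
    rcases hne with hs | ht
    · exact ih _ hz b hb c (by rw [det2_comb_left]; exact mul_ne_zero hs hD)
        (hsmall _ _ s hz hb hs0 hs1 (det2_comb_left a b s t)) h0 hcz h2
    · exact ih a ha _ hz c (by rw [det2_comb_right]; exact mul_ne_zero ht hD)
        (hsmall _ _ t ha hz ht0 ht1 (det2_comb_right a b s t)) h0 h1 hcz

/-- `a`, `b` form a basis of `ℤ²`, and `X`, `Y` are the coordinates with respect to it. -/
structure IsLatBasis (a b : E2) (X Y : E2 →ₗ[ℝ] ℝ) : Prop where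
  ha : a ∈ latticeZ2
  hb : b ∈ latticeZ2
  Xa : X a = 1
  Xb : X b = 0
  Ya : Y a = 0
  Yb : Y b = 1
  rep : ∀ q, q = X q • a + Y q • b
  Xint : ∀ z ∈ latticeZ2, ∃ m : ℤ, X z = m
  Yint : ∀ z ∈ latticeZ2, ∃ m : ℤ, Y z = m

lemma IsLatBasis.swap {a b : E2} {X Y : E2 →ₗ[ℝ] ℝ} (h : IsLatBasis a b X Y) :
    IsLatBasis b a Y X :=
  ⟨h.hb, h.ha, h.Yb, h.Ya, h.Xb, h.Xa, fun q => by rw [add_comm]; exact h.rep q,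
    h.Yint, h.Xint⟩

/-- Moving the base point of the triangle `0, a, b` to `a`. -/
lemma IsLatBasis.shift {a b : E2} {X Y : E2 →ₗ[ℝ] ℝ} (h : IsLatBasis a b X Y) :
    IsLatBasis (-a) (b - a) (-X - Y) Y where
  ha := neg_mem_lat h.ha
  hb := sub_mem_lat h.hb h.ha
  Xa := by simp [h.Xa, h.Ya]
  Xb := by simp [h.Xa, h.Xb, h.Ya, h.Yb]
  Ya := by simp [h.Ya]
  Yb := by simp [h.Ya, h.Yb]
  rep q := by
    conv_lhs => rw [h.rep q]
    simp only [LinearMap.sub_apply, LinearMap.neg_apply]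
    module
  Xint z hz := by
    obtain ⟨m, hm⟩ := h.Xint z hz
    obtain ⟨n, hn⟩ := h.Yint z hz
    exact ⟨-m - n, by simp [hm, hn]⟩
  Yint := h.Yint

lemma exists_isLatBasis {a b : E2} (ha : a ∈ latticeZ2) (hb : b ∈ latticeZ2)
    (hD : |det2 a b| = 1) : ∃ X Y, IsLatBasis a b X Y := by
  have hD0 : det2 a b ≠ 0 := by
    intro h
    simp [h] at hD
  have hdiv : ∀ k : ℤ, ∃ m : ℤ, (k : ℝ) / det2 a b = m := by
    intro k
    rcases (abs_eq zero_le_one).1 hD with h | h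
    · exact ⟨k, by simp [h]⟩
    · exact ⟨-k, by simp [h, div_neg]⟩
  refine ⟨{ toFun := fun q => det2 q b / det2 a b
            map_add' := fun x y => by simp only [det2, PiLp.add_apply]; ring
            map_smul' := fun r x => by
              simp only [det2, PiLp.smul_apply, smul_eq_mul, RingHom.id_apply]; ring },
          { toFun := fun q => det2 a q / det2 a b
            map_add' := fun x y => by simp only [det2, PiLp.add_apply]; ring
            map_smul' := fun r x => by
              simp only [det2, PiLp.smul_apply, smul_eq_mul, RingHom.id_apply]; ring },
          ha, hb, div_self hD0, ?_, ?_, div_self hD0, cramer hD0, ?_, ?_⟩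
  · simp [det2, mul_comm]
  · simp [det2, mul_comm]
  · intro z hz
    obtain ⟨k, hk⟩ := det2_int hz hb
    simpa [hk] using hdiv k
  · intro z hz
    obtain ⟨k, hk⟩ := det2_int ha hz
    simpa [hk] using hdiv k

lemma exists_basis_triple {K : Set E2} (hK : IsCompact K) (hc : Convex ℝ K)
    (hs : ∀ x ∈ K, -x ∈ K) (hcov : ∀ p : E2, ∃ z ∈ latticeZ2, p - z ∈ K) :
    ∃ (a b c : E2) (X Y : E2 →ₗ[ℝ] ℝ), IsLatBasis a b X Y ∧
      c ∈ K ∧ c - a ∈ K ∧ c - b ∈ K := by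
  obtain ⟨a, ha, b, hb, c, hD, h0, h1, h2⟩ := exists_triple hK hc hs hcov
  obtain ⟨n, hn⟩ := exists_nat_ge |det2 a b|
  obtain ⟨a, ha, b, hb, hD, c, h0, h1, h2⟩ :=
    exists_basis_triple_aux hc n a ha b hb c hD hn h0 h1 h2
  obtain ⟨X, Y, h⟩ := exists_isLatBasis ha hb hD
  exact ⟨a, b, c, X, Y, h, h0, h1, h2⟩

/-! ### Spacefillers inside the body -/

lemma IsLatBasis.ext {a b : E2} {X Y : E2 →ₗ[ℝ] ℝ} (h : IsLatBasis a b X Y) {p q : E2}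
    (hX : X p = X q) (hY : Y p = Y q) : p = q := by
  rw [h.rep p, h.rep q, hX, hY]

lemma abs_lt_of_mem_interior {S : Set E2} {f : E2 →ₗ[ℝ] ℝ} {w : E2} (hw : 0 < f w) {k r : ℝ}
    (h : ∀ q ∈ S, |f q - k| ≤ r) {q : E2} (hq : q ∈ interior S) : |f q - k| < r := by
  rw [mem_interior_iff_mem_nhds, Metric.mem_nhds_iff] at hq
  obtain ⟨ρ, hρ, hball⟩ := hq
  set ε := ρ / (2 * (‖w‖ + 1)) with hε
  have hw0 : 0 ≤ ‖w‖ := norm_nonneg w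
  have hε0 : 0 < ε := by positivity
  have hεw : ‖ε • w‖ < ρ := by
    rw [norm_smul, Real.norm_of_nonneg hε0.le]
    have : ε * (2 * (‖w‖ + 1)) = ρ := by
      rw [hε]
      field_simp
    nlinarith
  have h1 := h (q + ε • w) (hball (by simpa [dist_eq_norm] using hεw))
  have h2 := h (q - ε • w) (hball (by simpa [dist_eq_norm] using hεw))
  simp only [map_add, map_sub, map_smul, smul_eq_mul] at h1 h2
  have : 0 < ε * f w := mul_pos hε0 hw
  rw [abs_le] at h1 h2
  rw [abs_lt]
  constructor <;> linarith

/-- If `|f| ≤ r` on `L` and the interiors of `L + u` and `L + v` meet, then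
`|f (u - v)| < 2 r`. -/
lemma abs_sub_lt_of_interiors_meet {L : Set E2} {f : E2 →ₗ[ℝ] ℝ} {w : E2} (hw : 0 < f w)
    {r : ℝ} (h : ∀ q ∈ L, |f q| ≤ r) {u v q : E2} (hu : q ∈ interior ((· + u) '' L))
    (hv : q ∈ interior ((· + v) '' L)) : |f u - f v| < 2 * r := by
  have key : ∀ u, q ∈ interior ((· + u) '' L) → |f q - f u| < r := by
    intro u hu
    refine abs_lt_of_mem_interior hw ?_ hu
    rintro _ ⟨x, hx, rfl⟩
    simpa using h x hx
  have h1 := key u hu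
  have h2 := key v hv
  rw [abs_lt] at h1 h2 ⊢
  constructor <;> linarith

/-- If `X c ≥ 1/2`, then `K` contains the parallelogram with vertices `±c, ±(c - b)`, whose
chords in direction `b` are translates of the segment from `0` to `b`; its part in the strip `|X| ≤ 1/2` is a lattice
tile. -/
lemma exists_parallelogram {K : Set E2} (hc : Convex ℝ K) (hs : ∀ x ∈ K, -x ∈ K)
    {a b c : E2} {X Y : E2 →ₗ[ℝ] ℝ} (h : IsLatBasis a b X Y) (h0 : c ∈ K)
    (h2 : c - b ∈ K) (hα : 1 / 2 ≤ X c) :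
    ∃ L : Set E2, L ⊆ K ∧ Convex ℝ L ∧ IsSpacefiller L := by
  have hα0 : 0 < X c := by linarith
  set α := X c with hαdef
  set β := Y c with hβdef
  set κ := (β - 1 / 2) / α with hκ
  have hκα : κ * α = β - 1 / 2 := by
    rw [hκ]
    field_simp
  set u₁ := a + κ • b with hu₁
  set v := -((1 / 2 : ℝ) • (u₁ + b)) with hv
  set L : Set E2 := {p | ∃ s t : ℝ, s ∈ Icc (0:ℝ) 1 ∧ t ∈ Icc (0:ℝ) 1 ∧
    p = v + s • u₁ + t • b} with hL
  have hXu : X u₁ = 1 := by simp [hu₁, h.Xa, h.Xb]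
  have hYu : Y u₁ = κ := by simp [hu₁, h.Ya, h.Yb]
  have hXp : ∀ s t : ℝ, X (v + s • u₁ + t • b) = s - 1 / 2 := by
    intro s t
    simp [hv, hXu, h.Xb]
    ring
  have hYp : ∀ s t : ℝ, Y (v + s • u₁ + t • b) = (s - 1 / 2) * κ + (t - 1 / 2) := by
    intro s t
    simp [hv, hYu, h.Yb]
    ring
  refine ⟨L, ?_, ?_, Or.inl ⟨v, u₁, b, ?_, hL⟩, ?_, ?_⟩
  · rintro p ⟨s, t, hs', ht', rfl⟩
    set l := (s - 1 / 2) / (2 * α) + 1 / 2 with hl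
    have hlα : l * (2 * α) = s - 1 / 2 + α := by
      rw [hl]
      field_simp
    have hl0 : 0 ≤ l := by
      by_contra! hneg
      nlinarith [hs'.1]
    have hl1 : l ≤ 1 := by
      by_contra! hneg
      nlinarith [hs'.2]
    have hx1 := hc h0 h2 ht'.1 (sub_nonneg.2 ht'.2) (by ring)
    have hx2 := hc (hs _ h2) (hs _ h0) ht'.1 (sub_nonneg.2 ht'.2) (by ring)
    have hx := hc hx1 hx2 hl0 (sub_nonneg.2 hl1) (by ring)
    convert hx using 1
    apply h.ext
    · rw [hXp]
      simp [h.Xb, ← hαdef]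
      linear_combination -hlα
    · rw [hYp]
      simp [h.Yb, ← hβdef]
      have e : (s - 1 / 2) * κ = (2 * l - 1) * (β - 1 / 2) := by
        rw [← hκα]
        linear_combination -κ * hlα
      linear_combination e
  · rintro _ ⟨s, t, hs1, ht1, rfl⟩ _ ⟨s', t', hs2, ht2, rfl⟩ p q hp hq hpq
    refine ⟨p * s + q * s', p * t + q * t', (convex_Icc 0 1) hs1 hs2 hp hq hpq,
      (convex_Icc 0 1) ht1 ht2 hp hq hpq, ?_⟩
    have : v = (p + q) • v := by rw [hpq, one_smul]
    conv_rhs => rw [this]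
    module
  · rw [LinearIndependent.pair_iff]
    intro s t hst
    have e1 := congrArg X hst
    have e2 := congrArg Y hst
    simp [hXu, h.Xb] at e1
    simp [e1, h.Yb] at e2
    exact ⟨e1, e2⟩
  · rw [Set.eq_univ_iff_forall]
    intro q
    set x := X q with hx
    set y := Y q - (x - round x) * κ with hy
    have hx1 := abs_le.1 (abs_sub_round x)
    have hy1 := abs_le.1 (abs_sub_round y)
    refine ⟨_, ⟨x - round x + 1 / 2, y - round y + 1 / 2, ⟨by linarith, by linarith⟩,
      ⟨by linarith, by linarith⟩, rfl⟩, (round x : ℝ) • a + (round y : ℝ) • b,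
      add_mem_lat (zsmul_mem_lat _ h.ha) (zsmul_mem_lat _ h.hb), ?_⟩
    apply h.ext
    · simp only [map_add X (v + _ + _), hXp]
      simp [h.Xa, h.Xb]
      exact hx
    · simp only [map_add Y (v + _ + _), hYp]
      simp [h.Ya, h.Yb]
      rw [hy]
      ring
  · intro u hu w hw huw
    rw [Set.disjoint_left]
    intro q hq1 hq2
    apply huw
    have hbX : ∀ p ∈ L, |X p| ≤ 1 / 2 := by
      rintro _ ⟨s, t, hs', ht', rfl⟩
      rw [hXp, abs_le]
      constructor <;> linarith [hs'.1, hs'.2]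
    have hbY : ∀ p ∈ L, |(Y - κ • X) p| ≤ 1 / 2 := by
      rintro _ ⟨s, t, hs', ht', rfl⟩
      have e : (Y - κ • X) (v + s • u₁ + t • b) = t - 1 / 2 := by
        rw [LinearMap.sub_apply, LinearMap.smul_apply, hXp, hYp, smul_eq_mul]
        ring
      rw [e, abs_le]
      constructor <;> linarith [ht'.1, ht'.2]
    have d1 := abs_sub_lt_of_interiors_meet (w := a) (by simp [h.Xa]) hbX hq1 hq2
    have d2 := abs_sub_lt_of_interiors_meet (w := b) (by simp [h.Xb, h.Yb]) hbY hq1 hq2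
    obtain ⟨m, hm⟩ := h.Xint u hu
    obtain ⟨m', hm'⟩ := h.Xint w hw
    obtain ⟨n, hn⟩ := h.Yint u hu
    obtain ⟨n', hn'⟩ := h.Yint w hw
    have eX : m = m' := by
      rw [hm, hm'] at d1
      have : |m - m'| < 1 := by
        have : |(m : ℝ) - m'| < 1 := by linarith
        exact_mod_cast this
      exact sub_eq_zero.1 (Int.abs_lt_one_iff.1 this)
    have eY : n = n' := by
      simp only [LinearMap.sub_apply, LinearMap.smul_apply, hm, hm', hn, hn', eX] at d2
      have : |n - n'| < 1 := by
        have : |(n : ℝ) - n'| < 1 := by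
          convert d2 using 1
          · congr 1
            ring
          · norm_num
        exact_mod_cast this
      exact sub_eq_zero.1 (Int.abs_lt_one_iff.1 this)
    exact h.ext (by rw [hm, hm', eX]) (by rw [hn, hn', eY])

/-- A point of `L` at which two linear functionals separating points of the plane are both maximal
is an extreme point of `L`. -/
lemma mem_extremePoints_of_two_functionals {L : Set E2} {f g : E2 →ₗ[ℝ] ℝ} {p : E2}
    (hp : p ∈ L) (hf : ∀ q ∈ L, f q ≤ f p) (hg : ∀ q ∈ L, g q ≤ g p)
    (huniq : ∀ d, f d = 0 → g d = 0 → d = 0) : p ∈ Set.extremePoints ℝ L := by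
  rw [mem_extremePoints]
  refine ⟨hp, ?_⟩
  rintro x hx y hy ⟨s, t, hs, ht, hst, hxy⟩
  have key : ∀ f : E2 →ₗ[ℝ] ℝ, (∀ q ∈ L, f q ≤ f p) → f x = f p ∧ f y = f p := by
    intro f hf
    have e : f p = s * f x + t * f y := by
      rw [← hxy]
      simp
    have h1 := hf x hx
    have h2 := hf y hy
    have e' : s * f p + t * f p = f p := by rw [← add_mul, hst, one_mul]
    constructor
    · apply le_antisymm h1
      by_contra! hlt
      linarith [mul_lt_mul_of_pos_left hlt hs, mul_le_mul_of_nonneg_left h2 ht.le]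
    · apply le_antisymm h2
      by_contra! hlt
      linarith [mul_lt_mul_of_pos_left hlt ht, mul_le_mul_of_nonneg_left h1 hs.le]
  obtain ⟨f1, f2⟩ := key f hf
  obtain ⟨g1, g2⟩ := key g hg
  exact ⟨sub_eq_zero.1 (huniq _ (by simp [f1]) (by simp [g1])),
    sub_eq_zero.1 (huniq _ (by simp [f2]) (by simp [g2]))⟩

/-- One of the three subtriangles `c, u, w` of the triangle `0, a, b`: cutting it by the
median through `c` shows that it is covered by `L + u` and `L + w`. -/
lemma subtriangle_covered {L : Set E2} (hc : Convex ℝ L) (h0 : (0 : E2) ∈ L) {c u w : E2}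
    (hu : u ∈ latticeZ2) (hw : w ∈ latticeZ2) (hcu : c - u ∈ L) (hcw : c - w ∈ L)
    (hm : (1 / 2 : ℝ) • (w - u) ∈ L) (hm' : (1 / 2 : ℝ) • (u - w) ∈ L) {r s t : ℝ}
    (hr : 0 ≤ r) (hs : 0 ≤ s) (ht : 0 ≤ t) (hsum : r + s + t = 1) :
    ∃ z ∈ latticeZ2, r • c + s • u + t • w - z ∈ L := by
  have hr' : r = 1 - s - t := by linarith
  rcases le_total t s with hts | hts
  · refine ⟨u, hu, ?_⟩
    convert conv3 hc hcu h0 hm hr (sub_nonneg.2 hts) (by linarith : 0 ≤ 2 * t)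
      (by linarith) using 1
    rw [hr']
    module
  · refine ⟨w, hw, ?_⟩
    convert conv3 hc hcw h0 hm' hr (sub_nonneg.2 hts) (by linarith : 0 ≤ 2 * s)
      (by linarith) using 1
    rw [hr']
    module

/-- The vector `m a + n b` vanishes if it satisfies the three strict inequalities, one for each
pair of opposite edges of the hexagon below, that overlapping interiors of two translates
impose on their difference. -/
lemma int_eq_zero_of_bounds {α β : ℝ} (hα : α < 1 / 2) (hβ : β < 1 / 2) (hγ : 1 / 2 < α + β)
    {m n : ℤ} (d1 : |(1 - 2 * β) * m + 2 * α * n| < 2 * α)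
    (d2 : |-(1 - 2 * β) * m + (1 - 2 * α) * n| < 2 * (1 - α - β))
    (d3 : |2 * β * m + (1 - 2 * α) * n| < 2 * β) : m = 0 ∧ n = 0 := by
  rw [abs_lt] at d1 d2 d3
  have n1 : n < 2 := by
    have : (n : ℝ) < 2 := by linarith [d1.2, d2.2]
    exact_mod_cast this
  have n2 : -2 < n := by
    have : (-2 : ℝ) < n := by linarith [d1.1, d2.1]
    exact_mod_cast this
  have m1 : m < 2 := by
    have : (m : ℝ) < 2 := by linarith [d3.2, d2.1]
    exact_mod_cast this
  have m2 : -2 < m := by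
    have : (-2 : ℝ) < m := by linarith [d3.1, d2.2]
    exact_mod_cast this
  have s1 : m + n < 2 := by
    have : (m : ℝ) + n < 2 := by linarith [d1.2, d3.2]
    exact_mod_cast this
  have s2 : -2 < m + n := by
    have : (-2 : ℝ) < m + n := by linarith [d1.1, d3.1]
    exact_mod_cast this
  have hm' : m = -1 ∨ m = 0 ∨ m = 1 := by omega
  have hn' : n = -1 ∨ n = 0 ∨ n = 1 := by omega
  rcases hm' with rfl | rfl | rfl <;> rcases hn' with rfl | rfl | rfl <;>
    first
    | exact ⟨rfl, rfl⟩
    | (exfalso; omega)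
    | (exfalso; push_cast at d1 d2 d3; linarith [d1.1, d1.2, d2.1, d2.2, d3.1, d3.2])

set_option maxHeartbeats 1000000 in
/-- If the barycentric coordinates of `c` in the triangle `0, a, b` are all below `1/2`, the
points `±c, ±(c - a), ±(c - b)` are the vertices of a hexagonal lattice tile. -/
lemma exists_hexagon {K : Set E2} (hc : Convex ℝ K) (hs : ∀ x ∈ K, -x ∈ K)
    {a b c : E2} {X Y : E2 →ₗ[ℝ] ℝ} (h : IsLatBasis a b X Y) (h0 : c ∈ K)
    (h1 : c - a ∈ K) (h2 : c - b ∈ K) (hα : X c < 1 / 2) (hβ : Y c < 1 / 2)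
    (hγ : 1 / 2 < X c + Y c) :
    ∃ L : Set E2, L ⊆ K ∧ Convex ℝ L ∧ IsSpacefiller L := by
  set α := X c with hαdef
  set β := Y c with hβdef
  have hα0 : 0 < α := by linarith
  have hβ0 : 0 < β := by linarith
  set p : Fin 6 → E2 := ![c, b - c, c - a, -c, c - b, a - c] with hp
  set L : Set E2 := convexHull ℝ (Set.range p) with hL
  have hLc : Convex ℝ L := convex_convexHull ℝ _
  have hpL : ∀ i, p i ∈ L := fun i => subset_convexHull ℝ _ ⟨i, rfl⟩
  have m0 : c ∈ L := hpL 0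
  have m1 : b - c ∈ L := hpL 1
  have m2 : c - a ∈ L := hpL 2
  have m3 : -c ∈ L := hpL 3
  have m4 : c - b ∈ L := hpL 4
  have m5 : a - c ∈ L := hpL 5
  have hLS : ∀ S : Set E2, Convex ℝ S → c ∈ S → b - c ∈ S → c - a ∈ S → -c ∈ S →
      c - b ∈ S → a - c ∈ S → L ⊆ S := by
    intro S hS s0 s1 s2 s3 s4 s5
    apply convexHull_min _ hS
    rintro _ ⟨i, rfl⟩
    fin_cases i
    exacts [s0, s1, s2, s3, s4, s5]
  have hLK : L ⊆ K := by
    apply hLS K hc h0 _ h1 (hs _ h0) h2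
    · convert hs _ h1 using 1
      abel
    · convert hs _ h2 using 1
      abel
  have hLsymm : ∀ x ∈ L, -x ∈ L := by
    have hconv : Convex ℝ {x : E2 | -x ∈ L} := by
      intro x hx y hy s t hs' ht' hst
      have := hLc hx hy hs' ht' hst
      have e : -(s • x + t • y) = s • -x + t • -y := by module
      show -(s • x + t • y) ∈ L
      rw [e]
      exact this
    apply hLS _ hconv
    · exact m3
    · simpa using m4
    · simpa using m5
    · simpa using m0
    · simpa using m1
    · simpa using m2
  -- The three pairs of opposite edges lie on `f₁ = ±α`, `f₂ = ±(1 - α - β)`, `f₃ = ±β`.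
  set f₁ : E2 →ₗ[ℝ] ℝ := (1 - 2 * β) • X + (2 * α) • Y with hf₁
  set f₂ : E2 →ₗ[ℝ] ℝ := -(1 - 2 * β) • X + (1 - 2 * α) • Y with hf₂
  set f₃ : E2 →ₗ[ℝ] ℝ := (2 * β) • X + (1 - 2 * α) • Y with hf₃
  have hf₁v : ∀ q, f₁ q = (1 - 2 * β) * X q + 2 * α * Y q := fun q => by simp [hf₁]
  have hf₂v : ∀ q, f₂ q = -(1 - 2 * β) * X q + (1 - 2 * α) * Y q := fun q => by
    simp only [hf₂, LinearMap.add_apply, LinearMap.smul_apply, smul_eq_mul]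
  have hf₃v : ∀ q, f₃ q = 2 * β * X q + (1 - 2 * α) * Y q := fun q => by simp [hf₃]
  have hbound : ∀ (f : E2 →ₗ[ℝ] ℝ) (r : ℝ), |f c| ≤ r → |f (c - a)| ≤ r → |f (c - b)| ≤ r →
      ∀ q ∈ L, |f q| ≤ r := by
    intro f r e0 e1 e2
    have hconv : Convex ℝ {q : E2 | |f q| ≤ r} := by
      have e : {q : E2 | |f q| ≤ r} = f ⁻¹' Icc (-r) r := by
        ext q
        simp only [mem_ofPred_eq, mem_preimage, mem_Icc, abs_le]
      rw [e]
      exact (convex_Icc (-r) r).linear_preimage f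
    refine hLS _ hconv e0 ?_ e1 ?_ e2 ?_
    · show |f (b - c)| ≤ r
      rw [map_sub, abs_sub_comm, ← map_sub]
      exact e2
    · show |f (-c)| ≤ r
      rw [map_neg, abs_neg]
      exact e0
    · show |f (a - c)| ≤ r
      rw [map_sub, abs_sub_comm, ← map_sub]
      exact e1
  have hb1 : ∀ q ∈ L, |f₁ q| ≤ α := by
    apply hbound <;> rw [hf₁v] <;>
      simp only [map_sub, h.Xa, h.Xb, h.Ya, h.Yb, ← hαdef, ← hβdef] <;> rw [abs_le] <;>
      constructor <;> nlinarith
  have hb2 : ∀ q ∈ L, |f₂ q| ≤ 1 - α - β := by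
    apply hbound <;> rw [hf₂v] <;>
      simp only [map_sub, h.Xa, h.Xb, h.Ya, h.Yb, ← hαdef, ← hβdef] <;> rw [abs_le] <;>
      constructor <;> nlinarith
  have hb3 : ∀ q ∈ L, |f₃ q| ≤ β := by
    apply hbound <;> rw [hf₃v] <;>
      simp only [map_sub, h.Xa, h.Xb, h.Ya, h.Yb, ← hαdef, ← hβdef] <;> rw [abs_le] <;>
      constructor <;> nlinarith
  have u13 : ∀ d, f₁ d = 0 → f₃ d = 0 → d = 0 := by
    intro d e1 e3
    rw [hf₁v] at e1
    rw [hf₃v] at e3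
    have hne : 1 - 2 * α - 2 * β ≠ 0 := by linarith
    apply h.ext <;> apply mul_left_cancel₀ hne <;> rw [map_zero]
    · linear_combination (1 - 2 * α) * e1 - 2 * α * e3
    · linear_combination (1 - 2 * β) * e3 - 2 * β * e1
  have u12 : ∀ d, f₁ d = 0 → f₂ d = 0 → d = 0 := by
    intro d e1 e2
    rw [hf₁v] at e1
    rw [hf₂v] at e2
    have hne : 1 - 2 * β ≠ 0 := by linarith
    have hY : Y d = 0 := by linear_combination e1 + e2
    rw [hY] at e1
    apply h.ext
    · apply mul_left_cancel₀ hne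
      rw [map_zero]
      linear_combination e1
    · rw [hY, map_zero]
  have u23 : ∀ d, f₂ d = 0 → f₃ d = 0 → d = 0 := by
    intro d e2 e3
    rw [hf₂v] at e2
    rw [hf₃v] at e3
    have hne : 1 - 2 * α ≠ 0 := by linarith
    have hX : X d = 0 := by linear_combination e3 - e2
    rw [hX] at e3
    apply h.ext
    · rw [hX, map_zero]
    · apply mul_left_cancel₀ hne
      rw [map_zero]
      linear_combination e3
  have c1 : f₁ c = α := by rw [hf₁v, ← hαdef, ← hβdef]; ring
  have c3 : f₃ c = β := by rw [hf₃v, ← hαdef, ← hβdef]; ring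
  have b1 : f₁ (c - b) = -α := by
    rw [hf₁v]
    simp only [map_sub, h.Xb, h.Yb, ← hαdef, ← hβdef]
    ring
  have b2 : f₂ (c - b) = -(1 - α - β) := by
    rw [hf₂v]
    simp only [map_sub, h.Xb, h.Yb, ← hαdef, ← hβdef]
    ring
  have a2 : f₂ (c - a) = 1 - α - β := by
    rw [hf₂v]
    simp only [map_sub, h.Xa, h.Ya, ← hαdef, ← hβdef]
    ring
  have a3 : f₃ (c - a) = -β := by
    rw [hf₃v]
    simp only [map_sub, h.Xa, h.Ya, ← hαdef, ← hβdef]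
    ring
  have hext0 : c ∈ Set.extremePoints ℝ L :=
    mem_extremePoints_of_two_functionals (f := f₁) (g := f₃) m0
      (fun q hq => by rw [c1]; exact (abs_le.1 (hb1 q hq)).2)
      (fun q hq => by rw [c3]; exact (abs_le.1 (hb3 q hq)).2) u13
  have hext4 : c - b ∈ Set.extremePoints ℝ L :=
    mem_extremePoints_of_two_functionals (f := -f₁) (g := -f₂) m4
      (fun q hq => by
        simp only [LinearMap.neg_apply, b1]
        linarith [(abs_le.1 (hb1 q hq)).1])
      (fun q hq => by
        simp only [LinearMap.neg_apply, b2]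
        linarith [(abs_le.1 (hb2 q hq)).1])
      (fun d e1 e2 => u12 d (neg_eq_zero.1 e1) (neg_eq_zero.1 e2))
  have hext2 : c - a ∈ Set.extremePoints ℝ L :=
    mem_extremePoints_of_two_functionals (f := f₂) (g := -f₃) m2
      (fun q hq => by rw [a2]; exact (abs_le.1 (hb2 q hq)).2)
      (fun q hq => by
        simp only [LinearMap.neg_apply, a3]
        linarith [(abs_le.1 (hb3 q hq)).1])
      (fun d e1 e2 => u23 d e1 (neg_eq_zero.1 e2))
  have hextneg : ∀ x ∈ Set.extremePoints ℝ L, -x ∈ Set.extremePoints ℝ L := by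
    intro x hx
    rw [mem_extremePoints] at hx ⊢
    refine ⟨hLsymm x hx.1, ?_⟩
    rintro y hy z hz ⟨s, t, hs', ht', hst, hyz⟩
    obtain ⟨e1, e2⟩ := hx.2 (-y) (hLsymm y hy) (-z) (hLsymm z hz)
      ⟨s, t, hs', ht', hst, by rw [smul_neg, smul_neg, ← neg_add, hyz, neg_neg]⟩
    exact ⟨neg_eq_iff_eq_neg.1 e1, neg_eq_iff_eq_neg.1 e2⟩
  refine ⟨L, hLK, hLc, Or.inr ⟨0, p, ?_, hL, ?_⟩, ?_, ?_⟩
  · intro i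
    fin_cases i <;> simp [hp]
  · intro i
    fin_cases i
    · exact hext0
    · simpa [hp] using hextneg _ hext4
    · exact hext2
    · exact hextneg _ hext0
    · exact hext4
    · simpa [hp] using hextneg _ hext2
  · have half : ∀ x y z : E2, x ∈ L → y ∈ L → x + y = z → (1 / 2 : ℝ) • z ∈ L := by
      intro x y z hx hy hxy
      convert hLc hx hy (by norm_num : (0 : ℝ) ≤ 1 / 2) (by norm_num : (0 : ℝ) ≤ 1 / 2)
        (by norm_num) using 1
      rw [← hxy]
      module
    have hz : (0 : E2) ∈ L := by simpa using half c (-c) 0 m0 m3 (by abel)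
    have ha2 : (1 / 2 : ℝ) • (a - 0) ∈ L := half _ _ _ m0 m5 (by abel)
    have ha2' : (1 / 2 : ℝ) • (0 - a) ∈ L := half _ _ _ m2 m3 (by abel)
    have hb2 : (1 / 2 : ℝ) • (b - 0) ∈ L := half _ _ _ m0 m1 (by abel)
    have hb2' : (1 / 2 : ℝ) • (0 - b) ∈ L := half _ _ _ m4 m3 (by abel)
    have hab : (1 / 2 : ℝ) • (b - a) ∈ L := half _ _ _ m1 m2 (by abel)
    have hba : (1 / 2 : ℝ) • (a - b) ∈ L := half _ _ _ m4 m5 (by abel)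
    have m0' : c - 0 ∈ L := by simpa using m0
    have htri : ∀ q : E2, 0 ≤ X q → 0 ≤ Y q → X q + Y q ≤ 1 →
        ∃ z ∈ latticeZ2, q - z ∈ L := by
      intro q hx hy hxy
      have hγ0 : 0 < 1 - α - β := by linarith
      -- The smallest of the ratios of barycentric coordinates of `q` and `c` tells which
      -- of the triangles `c a b`, `c 0 b`, `c 0 a` contains `q`.
      obtain ⟨rx, hrx⟩ : ∃ r, X q = r * α := ⟨X q / α, by field_simp⟩
      obtain ⟨ry, hry⟩ : ∃ r, Y q = r * β := ⟨Y q / β, by field_simp⟩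
      obtain ⟨rz, hrz⟩ : ∃ r, 1 - X q - Y q = r * (1 - α - β) :=
        ⟨(1 - X q - Y q) / (1 - α - β), by field_simp⟩
      have hrx0 : 0 ≤ rx := by
        by_contra! hneg
        nlinarith
      have hry0 : 0 ≤ ry := by
        by_contra! hneg
        nlinarith
      have hrz0 : 0 ≤ rz := by
        by_contra! hneg
        nlinarith
      have caseZ : rz ≤ rx → rz ≤ ry → ∃ z ∈ latticeZ2, q - z ∈ L := by
        intro e1 e2
        have := subtriangle_covered hLc hz h.ha h.hb m2 m4 hab hba hrz0
          (mul_nonneg (sub_nonneg.2 e1) hα0.le) (mul_nonneg (sub_nonneg.2 e2) hβ0.le)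
          (by linear_combination -hrx - hry - hrz)
        convert this using 5
        apply h.ext
        · simp [h.Xa, h.Xb, ← hαdef, hrx]
          ring
        · simp [h.Ya, h.Yb, ← hβdef, hry]
          ring
      have caseX : rx ≤ ry → rx ≤ rz → ∃ z ∈ latticeZ2, q - z ∈ L := by
        intro e1 e2
        have := subtriangle_covered hLc hz zero_mem_lat h.hb m0' m4 hb2 hb2' hrx0
          (mul_nonneg (sub_nonneg.2 e2) hγ0.le) (mul_nonneg (sub_nonneg.2 e1) hβ0.le)
          (by linear_combination -hrx - hry - hrz)
        convert this using 5
        apply h.ext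
        · simp [h.Xb, ← hαdef, hrx]
        · simp [h.Yb, ← hβdef, hry]
          ring
      have caseY : ry ≤ rx → ry ≤ rz → ∃ z ∈ latticeZ2, q - z ∈ L := by
        intro e1 e2
        have := subtriangle_covered hLc hz zero_mem_lat h.ha m0' m2 ha2 ha2' hry0
          (mul_nonneg (sub_nonneg.2 e2) hγ0.le) (mul_nonneg (sub_nonneg.2 e1) hα0.le)
          (by linear_combination -hrx - hry - hrz)
        convert this using 5
        apply h.ext
        · simp [h.Xa, ← hαdef, hrx]
          ring
        · simp [h.Ya, ← hβdef, hry]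
      rcases le_total rx ry with e1 | e1
      · rcases le_total rx rz with e2 | e2
        · exact caseX e1 e2
        · exact caseZ e2 (e2.trans e1)
      · rcases le_total ry rz with e2 | e2
        · exact caseY e1 e2
        · exact caseZ (e2.trans e1) e2
    rw [Set.eq_univ_iff_forall]
    intro q
    set w := (⌊X q⌋ : ℝ) • a + (⌊Y q⌋ : ℝ) • b with hw
    have hwl : w ∈ latticeZ2 := add_mem_lat (zsmul_mem_lat _ h.ha) (zsmul_mem_lat _ h.hb)
    have hXw : X (q - w) = Int.fract (X q) := by simp [hw, h.Xa, h.Xb]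
    have hYw : Y (q - w) = Int.fract (Y q) := by simp [hw, h.Ya, h.Yb]
    have g1 := Int.fract_nonneg (X q)
    have g2 := Int.fract_nonneg (Y q)
    have g3 := Int.fract_lt_one (X q)
    have g4 := Int.fract_lt_one (Y q)
    have hfin : ∃ z ∈ latticeZ2, q - z ∈ L := by
      rcases le_total (Int.fract (X q) + Int.fract (Y q)) 1 with e | e
      · obtain ⟨z, hz, hzL⟩ := htri (q - w) (by rw [hXw]; exact g1) (by rw [hYw]; exact g2)
          (by rw [hXw, hYw]; exact e)
        exact ⟨w + z, add_mem_lat hwl hz, by rwa [← sub_sub]⟩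
      · have eX : X (a + b - (q - w)) = 1 - Int.fract (X q) := by
          rw [map_sub, hXw]
          simp [h.Xa, h.Xb]
        have eY : Y (a + b - (q - w)) = 1 - Int.fract (Y q) := by
          rw [map_sub, hYw]
          simp [h.Ya, h.Yb]
        obtain ⟨z, hz, hzL⟩ := htri (a + b - (q - w)) (by rw [eX]; linarith)
          (by rw [eY]; linarith) (by rw [eX, eY]; linarith)
        refine ⟨w + (a + b) - z, sub_mem_lat (add_mem_lat hwl (add_mem_lat h.ha h.hb)) hz, ?_⟩
        convert hLsymm _ hzL using 1
        abel
    obtain ⟨z, hz, hzL⟩ := hfin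
    exact ⟨q - z, hzL, z, hz, by simp⟩
  · intro u hu w hw huw
    rw [Set.disjoint_left]
    intro q hq1 hq2
    apply huw
    have d1 := abs_sub_lt_of_interiors_meet (w := b)
      (by rw [hf₁v, h.Xb, h.Yb]; linarith) hb1 hq1 hq2
    have d2 := abs_sub_lt_of_interiors_meet (w := b)
      (by rw [hf₂v, h.Xb, h.Yb]; linarith) hb2 hq1 hq2
    have d3 := abs_sub_lt_of_interiors_meet (w := b)
      (by rw [hf₃v, h.Xb, h.Yb]; linarith) hb3 hq1 hq2
    obtain ⟨m, hm⟩ := h.Xint (u - w) (sub_mem_lat hu hw)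
    obtain ⟨n, hn⟩ := h.Yint (u - w) (sub_mem_lat hu hw)
    rw [← map_sub, hf₁v, hm, hn] at d1
    rw [← map_sub, hf₂v, hm, hn] at d2
    rw [← map_sub, hf₃v, hm, hn] at d3
    have hmn := int_eq_zero_of_bounds hα hβ hγ d1 d2 d3
    apply sub_eq_zero.1
    apply h.ext
    · rw [hm, hmn.1]
      simp
    · rw [hn, hmn.2]
      simp

/-- A symmetric convex body whose lattice translates cover the plane contains a
spacefiller. -/
lemma exists_spacefiller {K : Set E2} (hK : IsCompact K) (hc : Convex ℝ K)
    (hs : ∀ x ∈ K, -x ∈ K) (hcov : ∀ p : E2, ∃ z ∈ latticeZ2, p - z ∈ K) :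
    ∃ L : Set E2, L ⊆ K ∧ Convex ℝ L ∧ IsSpacefiller L := by
  obtain ⟨a, b, c, X, Y, h, h0, h1, h2⟩ := exists_basis_triple hK hc hs hcov
  by_cases hα : 1 / 2 ≤ X c
  · exact exists_parallelogram hc hs h h0 h2 hα
  by_cases hβ : 1 / 2 ≤ Y c
  · exact exists_parallelogram hc hs h.swap h0 h1 hβ
  by_cases hγ : X c + Y c ≤ 1 / 2
  · refine exists_parallelogram hc hs h.shift h1 (by simpa using h2) ?_
    simp [h.Xa, h.Ya]
    linarith
  · push Not at hα hβ hγ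
    exact exists_hexagon hc hs h h0 h1 h2 hα hβ hγ

/-- A centrally symmetric convex body `K ⊆ ℝ²` contains a lattice point of `ℤ²` in any
position iff every rotation `Q(K)` of `K` contains a spacefiller with respect to `ℤ²`. -/
theorem coversAnyPosition_iff_rotations_contain_spacefiller (K : Set E2)
    (hK : IsCompact K) (hconv : Convex ℝ K) (hint : (interior K).Nonempty)
    (hsym : K = -K) :
    CoversAnyPosition K ↔
      ∀ Q : E2 ≃ₗᵢ[ℝ] E2, ∃ L : Set E2, L ⊆ Q '' K ∧ Convex ℝ L ∧ IsSpacefiller L := by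
  constructor
  · intro h Q
    refine exists_spacefiller (hK.image Q.continuous) (hconv.is_linear_image Q.isLinear) ?_ ?_
    · rintro _ ⟨y, hy, rfl⟩
      rw [hsym] at hy
      exact ⟨-y, hy, map_neg Q y⟩
    · intro p
      obtain ⟨_, ⟨y, hy, rfl⟩, hz⟩ := h Q (-p)
      exact ⟨_, neg_mem_lat hz, y, hy, by simp⟩
  · intro h Q x
    obtain ⟨L, hLK, -, -, hcov, -⟩ := h Q
    obtain ⟨l, hl, z, hz, hlz⟩ : -x ∈ L + latticeZ2 := by
      rw [hcov]
      trivial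
    obtain ⟨y, hy, rfl⟩ := hLK hl
    refine ⟨_, ⟨y, hy, rfl⟩, ?_⟩
    have e : Q y + x = -z := by
      have hlz' : Q y + z = -x := hlz
      have hx : x = -(Q y + z) := by rw [hlz', neg_neg]
      rw [hx]
      abel
    simp only [e]
    exact neg_mem_lat hz
end
end

section
/- Let H₆ denote the regular hexagon conv{(cos(2kπ/6), sin(2kπ/6)) : k = 0, 1, …, 5} ⊂ ℝ² and let t > 0. The following are equivalent: (i) t·H₆ contains a lattice point of ℤ² in any position; (ii) t·H₆ contains the square [−1/2, 1/2]²; (iii) t ≥ (3 + √3)/6. -/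
/-!
The hexagon `H₆` is cut out by `|√3 x ± y| ≤ √3` and `|y| ≤ √3 / 2`
(`mem_smul_Hgon_of_le`; the part of the converse that matters is `le_of_mem_smul_Hgon`), so its dilate by `t` contains the corner
`(1/2, 1/2)` of the unit square iff `(√3 + 1) / 2 ≤ √3 t`, i.e. `(3 + √3) / 6 ≤ t`.  This settles
the equivalence of the last two conditions.  For smaller `t`, the translate centred at `(1/2, 1/2)`
contains no lattice point, since every lattice point has both coordinates at distance at least
`1/2` from those of the centre.

It remains to see that the critical hexagon (`CritHex`) meets every rotated and translated copy of
`ℤ²`.  The hexagon is invariant under rotation by `π/3` and the lattice under rotation by `π/2`, so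
the property `Meets θ` of the rotation angle is `π/6`-periodic and one may assume `|θ| ≤ π/12`
(reflections are absorbed by replacing one lattice vector by its negative).  For such `θ`, with
lattice basis `p = (cos θ, sin θ)` and `q = (-sin θ, cos θ)`, the critical hexagon contains the
parallelogram `{(h δ + e) p + h q : |h|, |e| ≤ 1/2}` for the shear `δ = (1 - 1/√3) sin θ`
(`critHex_parallelogram`), and this sheared unit square is a fundamental domain of the lattice.
-/

open Set Pointwise Real MeasureTheory

noncomputable section

/-- The regular `m`-gon `conv{(cos(2kπ/m), sin(2kπ/m)) : k = 0, …, m-1}`. -/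
def Hgon (m : ℕ) : Set E2 :=
  convexHull ℝ
    {p | ∃ k : ℕ, k < m ∧ p = v2 (cos (2 * k * π / m)) (sin (2 * k * π / m))}

/-! ### The inequalities describing the hexagon -/

lemma v2_zero (a b : ℝ) : v2 a b 0 = a := by simp [v2]

lemma v2_one (a b : ℝ) : v2 a b 1 = b := by simp [v2]

lemma cos_sin_sixth (k : ℕ) (hk : k < 6) :
    (k = 0 ∧ cos (2 * k * π / (6 : ℕ)) = 1 ∧ sin (2 * k * π / (6 : ℕ)) = 0) ∨
    (k = 1 ∧ cos (2 * k * π / (6 : ℕ)) = 1 / 2 ∧ sin (2 * k * π / (6 : ℕ)) = √3 / 2) ∨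
    (k = 2 ∧ cos (2 * k * π / (6 : ℕ)) = -(1 / 2) ∧ sin (2 * k * π / (6 : ℕ)) = √3 / 2) ∨
    (k = 3 ∧ cos (2 * k * π / (6 : ℕ)) = -1 ∧ sin (2 * k * π / (6 : ℕ)) = 0) ∨
    (k = 4 ∧ cos (2 * k * π / (6 : ℕ)) = -(1 / 2) ∧ sin (2 * k * π / (6 : ℕ)) = -(√3 / 2)) ∨
    (k = 5 ∧ cos (2 * k * π / (6 : ℕ)) = 1 / 2 ∧ sin (2 * k * π / (6 : ℕ)) = -(√3 / 2)) := by
  have h1 : 2 * ((1 : ℕ) : ℝ) * π / (6 : ℕ) = π / 3 := by push_cast; ring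
  have h2 : 2 * ((2 : ℕ) : ℝ) * π / (6 : ℕ) = π - π / 3 := by push_cast; ring
  have h3 : 2 * ((3 : ℕ) : ℝ) * π / (6 : ℕ) = π := by push_cast; ring
  have h4 : 2 * ((4 : ℕ) : ℝ) * π / (6 : ℕ) = π / 3 + π := by push_cast; ring
  have h5 : 2 * ((5 : ℕ) : ℝ) * π / (6 : ℕ) = 2 * π - π / 3 := by push_cast; ring
  interval_cases k
  · left; simp
  · right; left; rw [h1]; simp
  · right; right; left; rw [h2]; simp [cos_pi_sub, sin_pi_sub]
  · right; right; right; left; rw [h3]; simp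
  · right; right; right; right; left; rw [h4]; simp [cos_add_pi, sin_add_pi]
  · right; right; right; right; right; rw [h5]; simp [cos_two_pi_sub, sin_two_pi_sub]

/-- The four non-horizontal edges bound the hexagon by `√3 |x| + |y| ≤ √3`; these edges alone are
responsible for the lower bound on `t`. -/
lemma le_of_mem_Hgon {x : E2} (hx : x ∈ Hgon 6) : √3 * |x 0| + |x 1| ≤ √3 := by
  have h3 : √3 * √3 = 3 := mul_self_sqrt (by norm_num)
  have h0 : 0 ≤ √3 := sqrt_nonneg 3
  have key : ∀ a b : ℝ, |a| ≤ √3 → |b| ≤ 1 → Hgon 6 ⊆ {x : E2 | a * x 0 + b * x 1 ≤ √3} := by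
    intro a b ha hb
    rw [abs_le] at ha hb
    refine convexHull_min ?_ ?_
    · rintro p ⟨k, hk, rfl⟩
      simp only [mem_ofPred_eq, v2_zero, v2_one]
      rcases cos_sin_sixth k hk with ⟨-, hc, hs⟩ | ⟨-, hc, hs⟩ | ⟨-, hc, hs⟩ | ⟨-, hc, hs⟩ |
        ⟨-, hc, hs⟩ | ⟨-, hc, hs⟩ <;> rw [hc, hs] <;>
        nlinarith [mul_le_mul_of_nonneg_left hb.1 h0, mul_le_mul_of_nonneg_left hb.2 h0]
    · intro x hx y hy u v hu hv huv
      simp only [mem_ofPred_eq, PiLp.add_apply, PiLp.smul_apply, smul_eq_mul] at *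
      calc _ = u * (a * x 0 + b * x 1) + v * (a * y 0 + b * y 1) := by ring
        _ ≤ u * √3 + v * √3 := by gcongr
        _ = √3 := by rw [← add_mul, huv, one_mul]
  have habs : |√3| ≤ √3 := (abs_of_nonneg h0).le
  have habs' : |-√3| ≤ √3 := by rw [abs_neg]; exact habs
  have e1 := key (√3) 1 habs (by simp) hx
  have e2 := key (√3) (-1) habs (by simp) hx
  have e3 := key (-√3) 1 habs' (by simp) hx
  have e4 := key (-√3) (-1) habs' (by simp) hx
  simp only [mem_ofPred_eq] at e1 e2 e3 e4
  rcases abs_cases (x 0) with ⟨h, -⟩ | ⟨h, -⟩ <;> rcases abs_cases (x 1) with ⟨h', -⟩ | ⟨h', -⟩ <;>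
    rw [h, h'] <;> linarith

lemma le_of_mem_smul_Hgon {t : ℝ} (ht : 0 < t) {x : E2} (hx : x ∈ t • Hgon 6) :
    √3 * |x 0| + |x 1| ≤ √3 * t := by
  obtain ⟨y, hy, rfl⟩ := hx
  have := le_of_mem_Hgon hy
  simp only [PiLp.smul_apply, smul_eq_mul, abs_mul, abs_of_pos ht]
  nlinarith

lemma v2_combo (a b a' b' u v : ℝ) :
    u • v2 a b + v • v2 a' b' = v2 (u * a + v * a') (u * b + v * b') := by
  ext i
  fin_cases i <;> simp [v2]

/-- A trapezoid with horizontal bases lies in every convex set containing its four vertices; here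
the bases are `[-1, 1] × {0}` and `[-1/2, 1/2] × {B}`, and `μ` is the relative height. -/
lemma trapezoid_mem {S : Set E2} (hS : Convex ℝ S) {B : ℝ} (h1 : v2 1 0 ∈ S) (h2 : v2 (-1) 0 ∈ S)
    (h3 : v2 (1 / 2) B ∈ S) (h4 : v2 (-(1 / 2)) B ∈ S) {x μ : ℝ} (hμ0 : 0 ≤ μ) (hμ1 : μ ≤ 1)
    (hx : |x| ≤ 1 - μ / 2) : v2 x (μ * B) ∈ S := by
  have hr : v2 (1 - μ / 2) (μ * B) ∈ S := by
    have := hS h1 h3 (sub_nonneg.2 hμ1) hμ0 (by ring)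
    rw [v2_combo] at this
    convert this using 2 <;> ring
  have hl : v2 (-(1 - μ / 2)) (μ * B) ∈ S := by
    have := hS h2 h4 (sub_nonneg.2 hμ1) hμ0 (by ring)
    rw [v2_combo] at this
    convert this using 2 <;> ring
  rw [abs_le] at hx
  have hpos : 0 < 1 - μ / 2 := by linarith
  have hw : 0 < 2 * (1 - μ / 2) := by linarith
  have := hS hr hl (a := ((1 - μ / 2) + x) / (2 * (1 - μ / 2)))
    (b := ((1 - μ / 2) - x) / (2 * (1 - μ / 2)))
    (div_nonneg (by linarith) hw.le) (div_nonneg (by linarith) hw.le)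
    (by rw [← add_div, div_eq_one_iff_eq hw.ne']; ring)
  rw [v2_combo] at this
  have hne : 1 - μ / 2 ≠ 0 := hpos.ne'
  generalize 1 - μ / 2 = w at *
  convert this using 2
  · field_simp; ring
  · field_simp; ring

lemma mem_Hgon_of_le {x y : ℝ} (h1 : √3 * |x| + |y| ≤ √3) (h2 : |y| ≤ √3 / 2) :
    v2 x y ∈ Hgon 6 := by
  have h0 : 0 < √3 := sqrt_pos.2 (by norm_num)
  have hS : Convex ℝ (Hgon 6) := convex_convexHull ℝ _
  have vert : ∀ k : ℕ, k < 6 →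
      v2 (cos (2 * k * π / (6 : ℕ))) (sin (2 * k * π / (6 : ℕ))) ∈ Hgon 6 :=
    fun k hk => subset_convexHull ℝ _ ⟨k, hk, rfl⟩
  have v0 := vert 0 (by norm_num)
  have v1 := vert 1 (by norm_num)
  have v2' := vert 2 (by norm_num)
  have v3 := vert 3 (by norm_num)
  have v4 := vert 4 (by norm_num)
  have v5 := vert 5 (by norm_num)
  have c0 := cos_sin_sixth 0 (by norm_num)
  have c1 := cos_sin_sixth 1 (by norm_num)
  have c2 := cos_sin_sixth 2 (by norm_num)
  have c3 := cos_sin_sixth 3 (by norm_num)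
  have c4 := cos_sin_sixth 4 (by norm_num)
  have c5 := cos_sin_sixth 5 (by norm_num)
  simp only [OfNat.ofNat_ne_zero, Nat.reduceEqDiff, one_ne_zero,
    OfNat.zero_ne_ofNat, zero_ne_one, OfNat.one_ne_ofNat, OfNat.ofNat_ne_one, false_and, or_false,
    false_or, true_and] at c0 c1 c2 c3 c4 c5
  rw [c0.1, c0.2] at v0
  rw [c1.1, c1.2] at v1
  rw [c2.1, c2.2] at v2'
  rw [c3.1, c3.2] at v3
  rw [c4.1, c4.2] at v4
  rw [c5.1, c5.2] at v5
  have hμ0 : 0 ≤ 2 * |y| / √3 := by positivity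
  have hμ1 : 2 * |y| / √3 ≤ 1 := by rw [div_le_one h0]; linarith
  have hx : |x| ≤ 1 - 2 * |y| / √3 / 2 := by
    have : 1 - 2 * |y| / √3 / 2 = (√3 - |y|) / √3 := by field_simp
    rw [this, le_div_iff₀ h0]; linarith
  rcases abs_cases y with ⟨h, -⟩ | ⟨h, -⟩
  · have := trapezoid_mem hS v0 v3 v1 v2' hμ0 hμ1 hx
    rw [h] at this
    convert this using 2
    field_simp
  · have := trapezoid_mem hS v0 v3 v5 v4 hμ0 hμ1 hx
    rw [h] at this
    convert this using 2
    field_simp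

lemma mem_smul_Hgon_of_le {t : ℝ} (ht : 0 < t) {x : E2} (h1 : √3 * |x 0| + |x 1| ≤ √3 * t)
    (h2 : |x 1| ≤ √3 * t / 2) : x ∈ t • Hgon 6 := by
  refine ⟨v2 (x 0 / t) (x 1 / t), mem_Hgon_of_le ?_ ?_, ?_⟩
  · rw [abs_div, abs_div, abs_of_pos ht, mul_div_assoc', ← add_div, div_le_iff₀ ht]
    exact h1
  · rw [abs_div, abs_of_pos ht, div_le_iff₀ ht]
    linarith
  · ext i
    fin_cases i <;> simp [v2] <;> field_simp

/-! ### The critical hexagon and rotated lattices -/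

/-- `CritHex x y` says that `(x, y)` lies in the hexagon `((3 + √3) / 6) • H₆`, in terms of its
edge inequalities. -/
def CritHex (x y : ℝ) : Prop :=
  |√3 * x + y| ≤ (√3 + 1) / 2 ∧ |√3 * x - y| ≤ (√3 + 1) / 2 ∧ |y| ≤ (√3 + 1) / 4

lemma mem_smul_Hgon_of_critHex {t : ℝ} (ht : (3 + √3) / 6 ≤ t) {x : E2}
    (h : CritHex (x 0) (x 1)) : x ∈ t • Hgon 6 := by
  obtain ⟨h1, h2, h3⟩ := h
  have h0 : 0 < √3 := sqrt_pos.2 (by norm_num)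
  have hsq : √3 * √3 = 3 := mul_self_sqrt (by norm_num)
  have hst : (√3 + 1) / 2 ≤ √3 * t := by nlinarith
  rw [abs_le] at h1 h2
  refine mem_smul_Hgon_of_le (by nlinarith) ?_ (by linarith)
  rcases abs_cases (x 0) with ⟨h, -⟩ | ⟨h, -⟩ <;> rcases abs_cases (x 1) with ⟨h', -⟩ | ⟨h', -⟩ <;>
    rw [h, h'] <;> linarith

/-- The critical hexagon centred at the origin meets the lattice `ℤ²` rotated by `θ`, wherever
that lattice is translated. -/
def Meets (θ : ℝ) : Prop :=
  ∀ a b : ℝ, ∃ m n : ℤ, CritHex ((m - a) * cos θ - (n - b) * sin θ)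
    ((m - a) * sin θ + (n - b) * cos θ)

lemma critHex_rotate (x y : ℝ) :
    CritHex (x * (1 / 2) - y * (√3 / 2)) (x * (√3 / 2) + y * (1 / 2)) ↔ CritHex x y := by
  have hsq : √3 * √3 = 3 := mul_self_sqrt (by norm_num)
  have e1 : √3 * (x * (1 / 2) - y * (√3 / 2)) + (x * (√3 / 2) + y * (1 / 2)) = √3 * x - y := by
    linear_combination (-y / 2) * hsq
  have e2 : √3 * (x * (1 / 2) - y * (√3 / 2)) - (x * (√3 / 2) + y * (1 / 2)) = -(2 * y) := by
    linear_combination (-y / 2) * hsq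
  have e3 : x * (√3 / 2) + y * (1 / 2) = (√3 * x + y) / 2 := by ring
  unfold CritHex
  rw [e1, e2, e3, abs_neg, abs_mul, abs_div, abs_two]
  constructor <;> rintro ⟨h1, h2, h3⟩ <;> refine ⟨?_, ?_, ?_⟩ <;> linarith

lemma meets_add_pi_div_three (θ : ℝ) : Meets (θ + π / 3) ↔ Meets θ := by
  unfold Meets
  refine forall₂_congr fun a b => exists₂_congr fun m n => ?_
  rw [← critHex_rotate ((m - a) * cos θ - (n - b) * sin θ), cos_add, sin_add,
    cos_pi_div_three, sin_pi_div_three]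
  apply iff_of_eq
  congr 1 <;> ring

lemma meets_add_pi_div_two (θ : ℝ) : Meets (θ + π / 2) ↔ Meets θ := by
  unfold Meets
  simp only [cos_add_pi_div_two, sin_add_pi_div_two]
  constructor
  · intro h a b
    obtain ⟨m, n, h⟩ := h b (-a)
    refine ⟨-n, m, ?_⟩
    convert h using 1 <;> push_cast <;> ring
  · intro h a b
    obtain ⟨m, n, h⟩ := h (-b) a
    refine ⟨n, -m, ?_⟩
    convert h using 1 <;> push_cast <;> ring

lemma meets_periodic : Function.Periodic Meets (π / 6) := by
  intro θ
  apply propext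
  rw [← meets_add_pi_div_three, ← meets_add_pi_div_two θ]
  apply iff_of_eq
  congr 1
  ring

/-- The parallelogram centred at the origin with edge vectors `p` and `δ p + q`, where `p = (c, s)`, `q = (-s, c)` and
`δ = (1 - 1/√3) s`, lies in the critical hexagon.  The shear `δ` is the one for which the two
edges that are tight at `s = 0` stay satisfied to first order; the exact remainder is then a
multiple of `1 - c ≥ 0` with positive cofactor. -/
lemma critHex_parallelogram {c s δ h e : ℝ} (hcs : c ^ 2 + s ^ 2 = 1) (hc : 19 / 20 ≤ c)
    (hs : |s| ≤ 27 / 100) (hδ : δ = (1 - √3 / 3) * s) (hh : |h| ≤ 1 / 2) (he : |e| ≤ 1 / 2) :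
    CritHex ((h * δ + e) * c - h * s) ((h * δ + e) * s + h * c) := by
  have hsq : √3 * √3 = 3 := mul_self_sqrt (by norm_num)
  have hlo : 1.73 ≤ √3 := le_sqrt_of_sq_le (by norm_num)
  have hhi : √3 ≤ 1.74 := sqrt_le_iff.2 ⟨by norm_num, by norm_num⟩
  have hc1 : c ≤ 1 := by nlinarith [sq_nonneg s]
  have bil : ∀ U V M : ℝ, |U| + |V| ≤ 2 * M → |h * U + e * V| ≤ M := by
    intro U V M hM
    calc |h * U + e * V| ≤ |h * U| + |e * V| := abs_add_le _ _
      _ = |h| * |U| + |e| * |V| := by rw [abs_mul, abs_mul]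
      _ ≤ 1 / 2 * |U| + 1 / 2 * |V| := by gcongr
      _ ≤ M := by linarith
  have hδs : |δ| ≤ 12 / 100 := by
    rw [hδ, abs_mul, abs_of_nonneg (by linarith)]
    nlinarith [abs_nonneg s]
  rw [abs_le] at hs hδs
  have k1 : 1.64 ≤ √3 * c := by nlinarith
  have k1' : √3 * c ≤ 1.74 := by nlinarith
  have k2 : |√3 * s| ≤ 0.47 := by rw [abs_le]; constructor <;> nlinarith
  have bd : ∀ D : ℝ, 0 ≤ D → D ≤ 2.1 → |δ * D| ≤ 0.26 := by
    intro D h0 h1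
    rw [abs_le]; constructor <;> nlinarith
  have d1 := bd (√3 * c + s) (by linarith) (by linarith)
  have d2 := bd (√3 * c - s) (by linarith) (by linarith)
  rw [abs_le] at k2 d1 d2
  -- `δ √3 = (√3 - 1) s` is what cancels the first-order terms.
  have hδ3 : δ * √3 = (√3 - 1) * s := by rw [hδ]; linear_combination (-s / 3) * hsq
  have hss : s * s = (1 - c) * (1 + c) := by linear_combination hcs
  have hδss : δ * s = (1 - √3 / 3) * ((1 - c) * (1 + c)) := by rw [hδ, mul_assoc, hss]
  refine ⟨?_, ?_, ?_⟩
  · have := bil (δ * (√3 * c + s) + c - √3 * s) (√3 * c + s) ((√3 + 1) / 2) ?_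
    · convert this using 2; ring
    · rw [abs_of_nonneg (by linarith), abs_of_nonneg (by linarith)]
      have : 0 ≤ (1 - c) * ((√3 + 1) + (√3 - 1) * s - (1 - √3 / 3) * (1 + c)) :=
        mul_nonneg (by linarith) (by nlinarith)
      linear_combination this + c * hδ3 + hδss
  · have := bil (δ * (√3 * c - s) - c - √3 * s) (√3 * c - s) ((√3 + 1) / 2) ?_
    · convert this using 2; ring
    · rw [abs_of_nonpos (by linarith), abs_of_nonneg (by linarith)]
      have : 0 ≤ (1 - c) * ((√3 + 1) - (√3 - 1) * s - (1 - √3 / 3) * (1 + c)) :=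
        mul_nonneg (by linarith) (by nlinarith)
      linear_combination this - c * hδ3 + hδss
  · have hδ' : |δ * s| ≤ 0.04 := by rw [abs_le]; constructor <;> nlinarith
    rw [abs_le] at hδ'
    have := bil (δ * s + c) s ((√3 + 1) / 4) ?_
    · convert this using 2; ring
    · rw [abs_of_nonneg (by linarith)]
      have : |s| ≤ 27 / 100 := abs_le.2 hs
      linarith

lemma meets_of_small {θ : ℝ} (hθ : |θ| ≤ π / 12) : Meets θ := by
  have hθ' : |θ| ≤ 27 / 100 := by linarith [pi_lt_d2]
  have hc : 19 / 20 ≤ cos θ := by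
    have := one_sub_sq_div_two_le_cos (x := θ)
    nlinarith [sq_abs θ, abs_nonneg θ]
  have hs : |sin θ| ≤ 27 / 100 := abs_sin_le_abs.trans hθ'
  intro a b
  have hb : |(round b : ℝ) - b| ≤ 1 / 2 := by rw [abs_sub_comm]; exact abs_sub_round b
  set h : ℝ := (round b : ℝ) - b with hh
  set δ : ℝ := (1 - √3 / 3) * sin θ with hδ
  have ha : |(round (a + h * δ) : ℝ) - (a + h * δ)| ≤ 1 / 2 := by
    rw [abs_sub_comm]; exact abs_sub_round _
  refine ⟨round (a + h * δ), round b, ?_⟩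
  convert critHex_parallelogram (cos_sq_add_sin_sq θ) hc hs hδ hb ha using 1 <;> rw [hh] <;> ring

lemma meets_all (θ : ℝ) : Meets θ := by
  have hpi := pi_pos
  have hr := abs_sub_round (θ / (π / 6))
  have hper : Meets (θ - round (θ / (π / 6)) • (π / 6)) = Meets θ :=
    meets_periodic.sub_zsmul_eq _
  rw [← hper]
  apply meets_of_small
  have : θ - round (θ / (π / 6)) • (π / 6)
      = (θ / (π / 6) - round (θ / (π / 6))) * (π / 6) := by
    rw [zsmul_eq_mul]; field_simp
  rw [this, abs_mul, abs_of_pos (by positivity : 0 < π / 6)]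
  nlinarith

/-- The critical hexagon meets every translate of the lattice spanned by an orthonormal basis
`p, q`.  The sign `p₀ q₁ - p₁ q₀ = ±1` decides whether `q` is `p` turned by `π/2` or its negative,
and in the second case the second lattice coordinate is negated. -/
lemma exists_critHex_of_orthonormal {p₀ p₁ q₀ q₁ : ℝ} (hp : p₀ ^ 2 + p₁ ^ 2 = 1)
    (hq : q₀ ^ 2 + q₁ ^ 2 = 1) (hpq : p₀ * q₀ + p₁ * q₁ = 0) (a b : ℝ) :
    ∃ m n : ℤ, CritHex ((m - a) * p₀ + (n - b) * q₀) ((m - a) * p₁ + (n - b) * q₁) := by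
  obtain ⟨θ, rfl, rfl⟩ : ∃ θ : ℝ, p₀ = cos θ ∧ p₁ = sin θ := by
    have hn : ‖(⟨p₀, p₁⟩ : ℂ)‖ = 1 := by
      rw [Complex.norm_def, Complex.normSq_mk, sqrt_eq_one]; linarith
    have hne : (⟨p₀, p₁⟩ : ℂ) ≠ 0 := by
      intro h; rw [h, norm_zero] at hn; exact zero_ne_one hn
    refine ⟨Complex.arg ⟨p₀, p₁⟩, ?_, ?_⟩
    · rw [Complex.cos_arg hne, hn, div_one]
    · rw [Complex.sin_arg, hn, div_one]
  set ε := cos θ * q₁ - sin θ * q₀ with hε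
  have hq0 : q₀ = -(ε * sin θ) := by
    rw [hε]; linear_combination (-q₀) * hp + cos θ * hpq
  have hq1 : q₁ = ε * cos θ := by
    rw [hε]; linear_combination (-q₁) * hp + sin θ * hpq
  have hε1 : (ε - 1) * (ε + 1) = 0 := by
    rw [hq0, hq1] at hq
    linear_combination hq - ε ^ 2 * hp
  rcases mul_eq_zero.1 hε1 with h | h
  · have h1 : ε = 1 := by linarith
    obtain ⟨m, n, hmn⟩ := meets_all θ a b
    refine ⟨m, n, ?_⟩
    rw [hq0, hq1, h1]
    convert hmn using 1 <;> ring
  · have h1 : ε = -1 := by linarith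
    obtain ⟨m, n, hmn⟩ := meets_all θ a (-b)
    refine ⟨m, -n, ?_⟩
    rw [hq0, hq1, h1]
    convert hmn using 1 <;> push_cast <;> ring

lemma coversAnyPosition_of_le {t : ℝ} (ht : (3 + √3) / 6 ≤ t) :
    CoversAnyPosition (t • Hgon 6) := by
  intro Q x
  have hdec : ∀ a b : ℝ, v2 a b = a • v2 1 0 + b • v2 0 1 := by
    intro a b; rw [v2_combo]; simp
  have hnorm : ∀ z : E2, z 0 ^ 2 + z 1 ^ 2 = ‖z‖ ^ 2 := by
    intro z; rw [EuclideanSpace.real_norm_sq_eq, Fin.sum_univ_two]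
  have hinner : ∀ z w : E2, z 0 * w 0 + z 1 * w 1 = inner ℝ z w := by
    intro z w; rw [PiLp.inner_apply, Fin.sum_univ_two]; simp [mul_comm]
  obtain ⟨m, n, h⟩ := exists_critHex_of_orthonormal
    (p₀ := Q.symm (v2 1 0) 0) (p₁ := Q.symm (v2 1 0) 1)
    (q₀ := Q.symm (v2 0 1) 0) (q₁ := Q.symm (v2 0 1) 1)
    (by rw [hnorm, Q.symm.norm_map, ← hnorm, v2_zero, v2_one]; norm_num)
    (by rw [hnorm, Q.symm.norm_map, ← hnorm, v2_zero, v2_one]; norm_num)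
    (by rw [hinner, Q.symm.inner_map_map, ← hinner]; simp [v2_zero, v2_one])
    (x 0) (x 1)
  have hx : x = v2 (x 0) (x 1) := by ext i; fin_cases i <;> simp [v2]
  refine ⟨v2 m n, ⟨Q.symm (v2 (m - x 0) (n - x 1)), ?_, ?_⟩, ?_⟩
  · apply mem_smul_Hgon_of_critHex ht
    rw [hdec, map_add, map_smul, map_smul]
    simpa using h
  · simp only [LinearIsometryEquiv.apply_symm_apply]
    ext i; fin_cases i <;> simp [v2]
  · intro i
    fin_cases i
    · exact ⟨m, by simp [v2]⟩
    · exact ⟨n, by simp [v2]⟩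

/-! ### Necessity of the bound -/

lemma half_le_abs_int_sub_half (m : ℤ) : (1 / 2 : ℝ) ≤ |(m : ℝ) - 1 / 2| := by
  rcases le_or_gt m 0 with h | h
  · have : (m : ℝ) ≤ 0 := by exact_mod_cast h
    rw [abs_of_nonpos (by linarith)]; linarith
  · have : (1 : ℝ) ≤ m := by exact_mod_cast h
    rw [abs_of_nonneg (by linarith)]; linarith

lemma le_of_mem_of_half_le {t : ℝ} (ht : 0 < t) {x : E2} (hx : x ∈ t • Hgon 6)
    (h0 : 1 / 2 ≤ |x 0|) (h1 : 1 / 2 ≤ |x 1|) : (3 + √3) / 6 ≤ t := by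
  have := le_of_mem_smul_Hgon ht hx
  have hsq : √3 * √3 = 3 := mul_self_sqrt (by norm_num)
  have hpos : 0 < √3 := sqrt_pos.2 (by norm_num)
  have : √3 * ((3 + √3) / 6) ≤ √3 * t := by nlinarith
  exact le_of_mul_le_mul_left this hpos

lemma le_of_coversAnyPosition {t : ℝ} (ht : 0 < t) (h : CoversAnyPosition (t • Hgon 6)) :
    (3 + √3) / 6 ≤ t := by
  obtain ⟨z, ⟨y, hy, rfl⟩, hz⟩ := h (LinearIsometryEquiv.refl ℝ E2) (v2 (1 / 2) (1 / 2))
  obtain ⟨m, hm⟩ := hz 0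
  obtain ⟨n, hn⟩ := hz 1
  simp only [LinearIsometryEquiv.coe_refl, id_eq, PiLp.add_apply, v2_zero, v2_one] at hm hn
  refine le_of_mem_of_half_le ht hy ?_ ?_
  · rw [eq_sub_of_add_eq hm]; exact half_le_abs_int_sub_half m
  · rw [eq_sub_of_add_eq hn]; exact half_le_abs_int_sub_half n

/-- For the regular hexagon, the following are equivalent: `t·H₆` contains a lattice
point of `ℤ²` in any position; `t·H₆` contains the square `[-1/2,1/2]²`;
`t ≥ (3 + √3)/6`. -/
theorem regularHexagon_covering (t : ℝ) (ht : 0 < t) :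
    List.TFAE
      [ CoversAnyPosition (t • Hgon 6),
        {x : E2 | x 0 ∈ Icc (-(1/2) : ℝ) (1/2) ∧ x 1 ∈ Icc (-(1/2) : ℝ) (1/2)}
          ⊆ t • Hgon 6,
        (3 + Real.sqrt 3) / 6 ≤ t ] := by
  tfae_have 1 → 3 := le_of_coversAnyPosition ht
  tfae_have 3 → 1 := coversAnyPosition_of_le
  tfae_have 2 → 3 := by
    intro h
    have hmem : v2 (1 / 2) (1 / 2) ∈ t • Hgon 6 := by
      apply h
      simp only [mem_ofPred_eq, v2_zero, v2_one, mem_Icc]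
      norm_num
    refine le_of_mem_of_half_le ht hmem ?_ ?_
    · rw [v2_zero]; exact le_abs_self _
    · rw [v2_one]; exact le_abs_self _
  tfae_have 3 → 2 := by
    rintro h x ⟨⟨h1, h2⟩, h3, h4⟩
    have hlo : 1.73 ≤ √3 := le_sqrt_of_sq_le (by norm_num)
    apply mem_smul_Hgon_of_critHex h
    refine ⟨?_, ?_, ?_⟩ <;> rw [abs_le] <;> constructor <;> nlinarith
  tfae_finish
end
end
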